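/- arXiv:2202.10219 — 6 statements merged into one kernel-verified Lean document; each statement's English description precedes it below -/
import Mathlib

section
/- Let C_{GN,2d} := inf{ ‖u‖_{L²(ℝ²)}² ‖∇u‖_{L²(ℝ²)}² / ‖u‖_{L⁴(ℝ²)}⁴ : u ∈ H¹(ℝ²), u ≠ 0 }. Then for every family (u_j)_{j∈ℤ} of functions in H¹(ℝ²) with Σ_{j∈ℤ} (‖u_j‖_{L²}² + ‖∇u_j‖_{L²}²) < ∞, one has I(u) := ∫_{ℝ²} (Σ_{i∈ℤ} |u_i(x)|²)² dx + Σ_{j∈ℤ} ∫_{ℝ²} (Σ_{i≠j} |u_i(x)|²) |u_j(x)|² dx ≤ 2 · C_{GN,2d}^{-1} · (Σ_{j∈ℤ} ‖u_j‖_{L²}²) · (Σ_{j∈ℤ} ‖∇u_j‖_{L²}²). -/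
open MeasureTheory
open scoped ENNReal

noncomputable section

/-- The underlying Euclidean space `ℝ²`. -/
abbrev R2 : Type := EuclideanSpace ℝ (Fin 2)

/-- The pointwise norm of the gradient of `u : ℝ² → ℂ`. -/
def gradNorm (u : R2 → ℂ) (x : R2) : ℝ := ‖fderiv ℝ u x‖

/-- `u ∈ H¹(ℝ²)`: `u` is differentiable, `u ∈ L²(ℝ²)` and `∇u ∈ L²(ℝ²)`. -/
def IsH1 (u : R2 → ℂ) : Prop :=
  Differentiable ℝ u ∧ MemLp u 2 volume ∧ MemLp (gradNorm u) 2 volume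

/-- The sharp 2D Gagliardo–Nirenberg (Weinstein) constant
`C_{GN,2d} = inf ‖u‖₂²‖∇u‖₂² / ‖u‖₄⁴` over nonzero `u ∈ H¹(ℝ²)`. -/
def CGN2d : ℝ≥0∞ :=
  ⨅ u ∈ {u : R2 → ℂ | IsH1 u ∧ ¬ u =ᵐ[volume] (0 : R2 → ℂ)},
    eLpNorm u 2 volume ^ (2 : ℕ) * eLpNorm (gradNorm u) 2 volume ^ (2 : ℕ) /
      eLpNorm u 4 volume ^ (4 : ℕ)

/-- The interaction nonlinearity of the large scale resonant system:
`I(u) = ∫ (Σᵢ |uᵢ|²)² dx + Σⱼ ∫ (Σ_{i≠j} |uᵢ|²)|uⱼ|² dx`. -/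
def Ifun (u : ℤ → R2 → ℂ) : ℝ≥0∞ :=
  (∫⁻ x, (∑' i : ℤ, (‖u i x‖₊ : ℝ≥0∞) ^ (2 : ℕ)) ^ (2 : ℕ) ∂volume) +
    ∑' j : ℤ, ∫⁻ x,
      (∑' i : ℤ, if i = j then 0 else (‖u i x‖₊ : ℝ≥0∞) ^ (2 : ℕ)) *
        (‖u j x‖₊ : ℝ≥0∞) ^ (2 : ℕ) ∂volume

/-!
Write `ρ = ∑ᵢ |uᵢ|²`. Adding the missing diagonal term `i = j` to the second part of `I(u)` turns
it into `∫ ρ²`, so `I(u) ≤ 2 ∫ ρ²`. Expand `∫ ρ² = ∑ᵢ ∑ⱼ ∫ |uᵢ|² |uⱼ|²` and set `aᵢ = ‖uᵢ‖₂²`,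
`bᵢ = ‖∇uᵢ‖₂²`, `C = C_{GN,2d}`. By Cauchy–Schwarz, the Gagliardo–Nirenberg inequality
`‖uᵢ‖₄⁴ ≤ C⁻¹ aᵢ bᵢ` and AM–GM,
`∫ |uᵢ|² |uⱼ|² ≤ C⁻¹ √(aᵢ bⱼ · aⱼ bᵢ) ≤ C⁻¹ (aᵢ bⱼ + aⱼ bᵢ) / 2`,
which sums to `C⁻¹ (∑ᵢ aᵢ) (∑ⱼ bⱼ)`.

The inequality `‖u‖₄⁴ ≤ C⁻¹ ‖u‖₂² ‖∇u‖₂²` follows from the definition of `C` as an infimum as soon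
as `∇u` does not vanish almost everywhere. If it did, then by Fubini the derivative of `u` along
almost every line would vanish almost everywhere, so `u` would be constant, hence zero by
integrability.
-/

section VanishingDerivative

variable {F : Type*} [NormedAddCommGroup F] [NormedSpace ℝ F] [CompleteSpace F]

theorem is_const_of_hasDerivAt_of_ae_eq_zero {f f' : ℝ → F} (hf : ∀ t, HasDerivAt f (f' t) t)
    (hf' : f' =ᵐ[volume] 0) (a b : ℝ) : f a = f b := by
  have integrable : IntervalIntegrable f' volume b a :=
    IntervalIntegrable.zero.congr_ae (ae_restrict_of_ae hf'.symm)
  have integral_eq_zero : ∫ t in b..a, f' t = 0 :=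
    intervalIntegral.integral_zero_ae (hf'.mono fun _ ht _ ↦ ht)
  have ftc := intervalIntegral.integral_eq_sub_of_hasDerivAt (fun t _ ↦ hf t) integrable
  exact sub_eq_zero.1 (ftc.symm.trans integral_eq_zero)

variable {E : Type*} [NormedAddCommGroup E] [NormedSpace ℝ E] [FiniteDimensional ℝ E]
  [MeasurableSpace E] [BorelSpace E] {μ : Measure E} [μ.IsAddHaarMeasure] {f : E → F}

theorem is_const_of_ae_fderiv_eq_zero (hf : Differentiable ℝ f)
    (hf' : ∀ᵐ x ∂μ, fderiv ℝ f x = 0) (x y : E) : f x = f y := by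
  set v := y - x
  have ae_line : ∀ᵐ z ∂μ, ∀ᵐ t : ℝ, fderiv ℝ f (z + t • v) = 0 :=
    (ae_ae_add_linearMap_mem_iff (LinearMap.toSpanSingleton ℝ E v) volume μ
      (measurable_fderiv ℝ f (measurableSet_singleton 0))).2 hf'
  have ae_translate : f =ᵐ[μ] fun z ↦ f (z + v) := by
    filter_upwards [ae_line] with z hz
    have hasDerivAt_line (t : ℝ) :
        HasDerivAt (fun t : ℝ ↦ f (z + t • v)) (fderiv ℝ f (z + t • v) v) t :=
      (hf _).hasFDerivAt.comp_hasDerivAt t <| by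
        simpa using ((hasDerivAt_id t).smul_const v).const_add z
    have ae_zero : (fun t : ℝ ↦ fderiv ℝ f (z + t • v) v) =ᵐ[volume] 0 :=
      hz.mono fun t ht ↦ by simp [ht]
    simpa using is_const_of_hasDerivAt_of_ae_eq_zero hasDerivAt_line ae_zero 0 1
  have hc := hf.continuous
  have translate : f = fun z ↦ f (z + v) :=
    (Continuous.ae_eq_iff_eq μ hc (by fun_prop)).1 ae_translate
  simpa [v] using congrFun translate x

theorem eq_zero_of_memLp_of_ae_fderiv_eq_zero [Nontrivial E] {p : ℝ≥0∞} (hp_ne_zero : p ≠ 0)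
    (hp_ne_top : p ≠ ∞) (hf : Differentiable ℝ f) (hfp : MemLp f p μ)
    (hf' : ∀ᵐ x ∂μ, fderiv ℝ f x = 0) : f = 0 := by
  have f_eq_const : f = fun _ ↦ f 0 := funext fun x ↦ is_const_of_ae_fderiv_eq_zero hf hf' x 0
  have : NoncompactSpace E := NormedSpace.noncompactSpace ℝ E
  rw [f_eq_const, memLp_const_iff hp_ne_zero hp_ne_top] at hfp
  have f_zero : f 0 = 0 := hfp.resolve_right (by simp)
  rw [f_eq_const, f_zero]
  rfl

end VanishingDerivative

section GagliardoNirenberg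

theorem lintegral_enorm_sq_sq {α ε : Type*} [MeasurableSpace α] [ENorm ε] (μ : Measure α)
    (u : α → ε) : ∫⁻ x, (‖u x‖ₑ ^ 2) ^ 2 ∂μ = eLpNorm u 4 μ ^ 4 := by
  have pow_four : eLpNorm u 4 μ ^ 4 = ∫⁻ x, ‖u x‖ₑ ^ 4 ∂μ := by
    simpa using eLpNorm_nnreal_pow_eq_lintegral (μ := μ) (f := u) (p := 4) four_ne_zero
  simp [pow_four, ← pow_mul]

variable {u : R2 → ℂ}

theorem IsH1.eq_zero_of_eLpNorm_gradNorm_eq_zero (hu : IsH1 u)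
    (h : eLpNorm (gradNorm u) 2 volume = 0) : u = 0 := by
  obtain ⟨differentiable, memLp, memLp_grad⟩ := hu
  have gradNorm_ae : gradNorm u =ᵐ[volume] 0 :=
    (eLpNorm_eq_zero_iff memLp_grad.aestronglyMeasurable two_ne_zero).1 h
  exact eq_zero_of_memLp_of_ae_fderiv_eq_zero two_ne_zero ENNReal.ofNat_ne_top differentiable memLp
    (gradNorm_ae.mono fun _ hx ↦ norm_eq_zero.1 hx)

theorem IsH1.eLpNorm_four_pow_four_le (hu : IsH1 u) :
    eLpNorm u 4 volume ^ 4 ≤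
      CGN2d⁻¹ * (eLpNorm u 2 volume ^ 2 * eLpNorm (gradNorm u) 2 volume ^ 2) := by
  by_cases u_ae_zero : u =ᵐ[volume] 0
  · simp [eLpNorm_congr_ae u_ae_zero]
  have norm_ne_zero : eLpNorm u 2 volume ≠ 0 := fun h ↦
    u_ae_zero ((eLpNorm_eq_zero_iff hu.2.1.aestronglyMeasurable two_ne_zero).1 h)
  have grad_ne_zero : eLpNorm (gradNorm u) 2 volume ≠ 0 := fun h ↦
    u_ae_zero (hu.eq_zero_of_eLpNorm_gradNorm_eq_zero h).eventuallyEq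
  set P := eLpNorm u 2 volume ^ 2 * eLpNorm (gradNorm u) 2 volume ^ 2
  have P_ne_zero : P ≠ 0 := mul_ne_zero (pow_ne_zero _ norm_ne_zero) (pow_ne_zero _ grad_ne_zero)
  have P_ne_top : P ≠ ∞ := ENNReal.mul_ne_top (ENNReal.pow_ne_top hu.2.1.eLpNorm_ne_top)
    (ENNReal.pow_ne_top hu.2.2.eLpNorm_ne_top)
  have CGN2d_le : CGN2d ≤ P / eLpNorm u 4 volume ^ 4 := iInf₂_le u ⟨hu, u_ae_zero⟩
  rw [← ENNReal.div_le_iff P_ne_zero P_ne_top,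
    ← ENNReal.inv_div (Or.inr P_ne_top) (Or.inr P_ne_zero)]
  exact ENNReal.inv_le_inv.2 CGN2d_le

end GagliardoNirenberg

section SquareOfSum

theorem ennreal_four_mul_le_sq_add (a b : ℝ≥0∞) : 4 * a * b ≤ (a + b) ^ 2 := by
  rcases eq_or_ne a ∞ with rfl | ha
  · simp
  rcases eq_or_ne b ∞ with rfl | hb
  · simp
  lift a to NNReal using ha
  lift b to NNReal using hb
  exact_mod_cast four_mul_le_sq_add a b

variable {α : Type*} [MeasurableSpace α] {μ : Measure α}

theorem sq_lintegral_mul_le {f g : α → ℝ≥0∞} (hf : AEMeasurable f μ) (hg : AEMeasurable g μ) :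
    (∫⁻ x, f x * g x ∂μ) ^ 2 ≤ (∫⁻ x, f x ^ 2 ∂μ) * ∫⁻ x, g x ^ 2 ∂μ := by
  have sq_sqrt (y : ℝ≥0∞) : (y ^ (2⁻¹ : ℝ)) ^ 2 = y := by
    simp [← ENNReal.rpow_mul_natCast]
  have holder := ENNReal.lintegral_mul_le_Lp_mul_Lq μ Real.HolderConjugate.two_two hf hg
  simpa [mul_pow, sq_sqrt] using pow_le_pow_left' holder 2

theorem two_mul_lintegral_mul_le {f g : α → ℝ≥0∞} (hf : AEMeasurable f μ) (hg : AEMeasurable g μ)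
    {c a b a' b' : ℝ≥0∞} (hfab : ∫⁻ x, f x ^ 2 ∂μ ≤ c * (a * b))
    (hgab : ∫⁻ x, g x ^ 2 ∂μ ≤ c * (a' * b')) :
    2 * ∫⁻ x, f x * g x ∂μ ≤ c * (a * b' + a' * b) := by
  refine (ENNReal.pow_le_pow_left_iff two_ne_zero).1 ?_
  calc (2 * ∫⁻ x, f x * g x ∂μ) ^ 2
      = 4 * (∫⁻ x, f x * g x ∂μ) ^ 2 := by rw [mul_pow]; norm_num
    _ ≤ 4 * (c * (a * b) * (c * (a' * b'))) := by
        gcongr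
        exact (sq_lintegral_mul_le hf hg).trans (mul_le_mul' hfab hgab)
    _ = c ^ 2 * (4 * (a * b') * (a' * b)) := by ring
    _ ≤ c ^ 2 * (a * b' + a' * b) ^ 2 := by
        gcongr
        exact ennreal_four_mul_le_sq_add _ _
    _ = (c * (a * b' + a' * b)) ^ 2 := (mul_pow _ _ _).symm

variable {ι : Type*} [Countable ι] {f : ι → α → ℝ≥0∞}

theorem lintegral_tsum_sq (hf : ∀ i, AEMeasurable (f i) μ) :
    ∫⁻ x, (∑' i, f i x) ^ 2 ∂μ = ∑' i, ∑' j, ∫⁻ x, f i x * f j x ∂μ := by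
  simp_rw [sq, ← ENNReal.tsum_mul_right, ← ENNReal.tsum_mul_left]
  rw [lintegral_tsum (by fun_prop)]
  exact tsum_congr fun i ↦ lintegral_tsum (by fun_prop)

theorem lintegral_tsum_sq_le (hf : ∀ i, AEMeasurable (f i) μ) {c : ℝ≥0∞} {a b : ι → ℝ≥0∞}
    (hab : ∀ i, ∫⁻ x, f i x ^ 2 ∂μ ≤ c * (a i * b i)) :
    ∫⁻ x, (∑' i, f i x) ^ 2 ∂μ ≤ c * ((∑' i, a i) * ∑' i, b i) := by
  refine (ENNReal.mul_le_mul_iff_right two_ne_zero ENNReal.ofNat_ne_top).1 ?_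
  calc 2 * ∫⁻ x, (∑' i, f i x) ^ 2 ∂μ
      = ∑' i, ∑' j, 2 * ∫⁻ x, f i x * f j x ∂μ := by
        simp_rw [lintegral_tsum_sq hf, ENNReal.tsum_mul_left]
    _ ≤ ∑' i, ∑' j, c * (a i * b j + a j * b i) :=
        ENNReal.tsum_le_tsum fun i ↦ ENNReal.tsum_le_tsum fun j ↦
          two_mul_lintegral_mul_le (hf i) (hf j) (hab i) (hab j)
    _ = 2 * (c * ((∑' i, a i) * ∑' i, b i)) := by
        simp_rw [ENNReal.tsum_mul_left, ENNReal.tsum_add, ENNReal.tsum_mul_left,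
          ENNReal.tsum_mul_right, ENNReal.tsum_mul_left]
        ring

end SquareOfSum

section Interaction

variable {α ι : Type*} [MeasurableSpace α] [DecidableEq ι]

/-- The resonant interaction `∫ (∑ᵢ fᵢ)² + ∑ⱼ ∫ (∑_{i ≠ j} fᵢ) fⱼ` of a family of densities, over
an arbitrary measure and index type. The functional `Ifun u` is the case `fᵢ = |uᵢ|²`. -/
def resonantInteraction (μ : Measure α) (f : ι → α → ℝ≥0∞) : ℝ≥0∞ :=
  (∫⁻ x, (∑' i, f i x) ^ 2 ∂μ) + ∑' j, ∫⁻ x, (∑' i, if i = j then 0 else f i x) * f j x ∂μ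

theorem resonantInteraction_le_two_mul_lintegral_tsum_sq [Countable ι] {μ : Measure α}
    {f : ι → α → ℝ≥0∞} (hf : ∀ i, AEMeasurable (f i) μ) :
    resonantInteraction μ f ≤ 2 * ∫⁻ x, (∑' i, f i x) ^ 2 ∂μ := by
  have off_diagonal_le (j : ι) (x : α) : (∑' i, if i = j then 0 else f i x) ≤ ∑' i, f i x :=
    ENNReal.tsum_le_tsum fun i ↦ by split_ifs <;> simp
  rw [resonantInteraction, two_mul]
  gcongr
  calc ∑' j, ∫⁻ x, (∑' i, if i = j then 0 else f i x) * f j x ∂μ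
      ≤ ∑' j, ∫⁻ x, (∑' i, f i x) * f j x ∂μ := by
        gcongr ∑' j, ∫⁻ x, ?_ * f j x ∂μ with j x
        exact off_diagonal_le j x
    _ = ∫⁻ x, (∑' i, f i x) ^ 2 ∂μ := by
        rw [← lintegral_tsum (by fun_prop)]
        simp_rw [ENNReal.tsum_mul_left, sq]

theorem resonant_interaction_bound_general [Countable ι] (u : ι → R2 → ℂ)
    (hu : ∀ j, IsH1 (u j)) :
    resonantInteraction volume (fun j x ↦ ‖u j x‖ₑ ^ 2) ≤
      2 * CGN2d⁻¹ * (∑' j, eLpNorm (u j) 2 volume ^ 2) *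
        (∑' j, eLpNorm (gradNorm (u j)) 2 volume ^ 2) := by
  have density_aemeasurable (j : ι) : AEMeasurable (fun x ↦ ‖u j x‖ₑ ^ 2) :=
    (hu j).2.1.aestronglyMeasurable.enorm.pow_const 2
  have gagliardo_nirenberg (j : ι) : ∫⁻ x, (‖u j x‖ₑ ^ 2) ^ 2 ≤
      CGN2d⁻¹ * (eLpNorm (u j) 2 volume ^ 2 * eLpNorm (gradNorm (u j)) 2 volume ^ 2) :=
    (lintegral_enorm_sq_sq volume (u j)).trans_le (hu j).eLpNorm_four_pow_four_le
  calc resonantInteraction volume (fun j x ↦ ‖u j x‖ₑ ^ 2)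
      ≤ 2 * ∫⁻ x, (∑' j, ‖u j x‖ₑ ^ 2) ^ 2 :=
        resonantInteraction_le_two_mul_lintegral_tsum_sq density_aemeasurable
    _ ≤ 2 * (CGN2d⁻¹ * ((∑' j, eLpNorm (u j) 2 volume ^ 2) *
          ∑' j, eLpNorm (gradNorm (u j)) 2 volume ^ 2)) := by
        gcongr
        exact lintegral_tsum_sq_le density_aemeasurable gagliardo_nirenberg
    _ = _ := by ring

end Interaction

/-- Lower-bound half of Proposition 1.1: for every family `(u_j)_{j∈ℤ} ⊂ H¹(ℝ²)` with
`Σ_j (‖u_j‖₂² + ‖∇u_j‖₂²) < ∞`, one has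
`I(u) ≤ 2 C_{GN,2d}⁻¹ (Σ_j ‖u_j‖₂²) (Σ_j ‖∇u_j‖₂²)`. -/
theorem resonant_interaction_bound (u : ℤ → R2 → ℂ) (hu : ∀ j, IsH1 (u j))
    (hfin : (∑' j : ℤ, (eLpNorm (u j) 2 volume ^ (2 : ℕ) +
        eLpNorm (gradNorm (u j)) 2 volume ^ (2 : ℕ))) < ⊤) :
    Ifun u ≤ 2 * CGN2d⁻¹ * (∑' j : ℤ, eLpNorm (u j) 2 volume ^ (2 : ℕ)) *
      (∑' j : ℤ, eLpNorm (gradNorm (u j)) 2 volume ^ (2 : ℕ)) :=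
  resonant_interaction_bound_general u hu

end
end

section
/- There exists a constant C > 0 such that for every continuously differentiable function u : 𝕋 → ℂ with ∫_𝕋 u(y) dy = 0, one has ‖u‖_{L⁴(𝕋)}⁴ ≤ C · ‖u‖_{L²(𝕋)}³ · ‖u'‖_{L²(𝕋)}. -/
open Real intervalIntegral

noncomputable section

/-!
A real function with mean zero on an interval vanishes somewhere, so integrating `(f²)' = 2 f f'`
from a zero gives `f(x)² ≤ 2 ∫ |f| |f'|`. Testing a vector-valued `u` against a norming functional
of `u(x)` turns this into `‖u(x)‖² ≤ 2 ∫ ‖u‖ ‖u'‖`, which is at most `2 ‖u‖_{L²} ‖u'‖_{L²}` by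
Cauchy–Schwarz. The `L⁴` estimate follows from `‖u‖⁴ ≤ (sup ‖u‖²) ‖u‖²`.
-/

open MeasureTheory Set

variable {E : Type*} [NormedAddCommGroup E]

theorem integral_norm_pow_add_le_of_norm_pow_le {α : Type*} [MeasurableSpace α] {μ : Measure α}
    {u : α → E} {m n : ℕ} {K : ℝ} (hu : Integrable (fun x ↦ ‖u x‖ ^ n) μ)
    (hK : ∀ᵐ x ∂μ, ‖u x‖ ^ m ≤ K) :
    ∫ x, ‖u x‖ ^ (m + n) ∂μ ≤ K * ∫ x, ‖u x‖ ^ n ∂μ := by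
  rw [← MeasureTheory.integral_const_mul]
  refine integral_mono_of_nonneg (.of_forall fun x ↦ by positivity) (hu.const_mul K) ?_
  filter_upwards [hK] with x hx
  rw [pow_add]
  gcongr

theorem integral_norm_mul_norm_le_L2_mul_L2 {α : Type*} [MeasurableSpace α] {μ : Measure α}
    {f g : α → E} (hf : MemLp f 2 μ) (hg : MemLp g 2 μ) :
    ∫ x, ‖f x‖ * ‖g x‖ ∂μ ≤
      (∫ x, ‖f x‖ ^ 2 ∂μ) ^ ((1 : ℝ) / 2) * (∫ x, ‖g x‖ ^ 2 ∂μ) ^ ((1 : ℝ) / 2) := by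
  have holder := integral_mul_norm_le_Lp_mul_Lq (μ := μ) HolderConjugate.two_two
    (f := f) (g := g) (by simpa using hf) (by simpa using hg)
  simpa only [rpow_two] using holder

variable [NormedSpace ℝ E] {a b : ℝ} {u : ℝ → E}

theorem norm_sub_le_integral_of_norm_deriv_le_of_mem_Icc {B : ℝ → ℝ} {c x : ℝ}
    (hu : ContinuousOn u (Icc a b)) (hdiff : DifferentiableOn ℝ u (Ioo a b))
    (hB : ∀ t ∈ Ioo a b, ‖deriv u t‖ ≤ B t) (hBi : IntervalIntegrable B volume a b)
    (hc : c ∈ Icc a b) (hx : x ∈ Icc a b) :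
    ‖u x - u c‖ ≤ ∫ t in a..b, B t := by
  wlog hcx : c ≤ x generalizing c x
  · rw [norm_sub_rev]
    exact this hx hc (le_of_not_ge hcx)
  have Ioo_subset : Ioo c x ⊆ Ioo a b := Ioo_subset_Ioo hc.1 hx.2
  have B_nonneg : 0 ≤ᵐ[volume.restrict (Ioc a b)] B := by
    rw [← restrict_Ioo_eq_restrict_Ioc]
    exact (ae_restrict_mem measurableSet_Ioo).mono fun t ht ↦ (norm_nonneg _).trans (hB t ht)
  calc ‖u x - u c‖ ≤ ∫ t in c..x, B t :=
        norm_sub_le_integral_of_norm_deriv_le_of_le hcx (hu.mono (Icc_subset_Icc hc.1 hx.2))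
          (hdiff.mono Ioo_subset) (.of_forall fun t ht ↦ hB t (Ioo_subset ht))
          (hBi.mono_set (uIcc_subset_uIcc (Icc_subset_uIcc hc) (Icc_subset_uIcc hx)))
    _ ≤ ∫ t in a..b, B t := integral_mono_interval hc.1 hcx hx.2 B_nonneg hBi

theorem exists_eq_zero_of_intervalIntegral_eq_zero {f : ℝ → ℝ} (hab : a < b)
    (hf : ContinuousOn f (Icc a b)) (hmean : ∫ t in a..b, f t = 0) :
    ∃ c ∈ Ioo a b, f c = 0 := by
  obtain ⟨c, hc, hfc⟩ := exists_eq_interval_average hab.ne (by rwa [uIcc_of_le hab.le])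
  rw [uIoo_of_le hab.le] at hc
  exact ⟨c, hc, by rw [hfc, interval_average_eq, hmean, smul_zero]⟩

theorem sq_le_two_mul_integral_of_intervalIntegral_eq_zero {f B : ℝ → ℝ} {x : ℝ} (hab : a < b)
    (hf : ContinuousOn f (Icc a b)) (hdiff : DifferentiableOn ℝ f (Ioo a b))
    (hB : ∀ t ∈ Ioo a b, |f t| * |deriv f t| ≤ B t) (hBi : IntervalIntegrable B volume a b)
    (hmean : ∫ t in a..b, f t = 0) (hx : x ∈ Icc a b) :
    f x ^ 2 ≤ 2 * ∫ t in a..b, B t := by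
  obtain ⟨c, hc, hfc⟩ := exists_eq_zero_of_intervalIntegral_eq_zero hab hf hmean
  have norm_deriv_sq_le : ∀ t ∈ Ioo a b, ‖deriv (fun s ↦ f s ^ 2) t‖ ≤ 2 * B t := fun t ht ↦ by
    have hft : DifferentiableAt ℝ f t := hdiff.differentiableAt (isOpen_Ioo.mem_nhds ht)
    rw [(hft.hasDerivAt.fun_pow 2).deriv, norm_eq_abs]
    simpa [abs_mul, mul_assoc] using hB t ht
  calc f x ^ 2 ≤ ‖f x ^ 2 - f c ^ 2‖ := by simp [hfc]
    _ ≤ ∫ t in a..b, 2 * B t :=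
        norm_sub_le_integral_of_norm_deriv_le_of_mem_Icc (hf.pow 2) (hdiff.fun_pow 2)
          norm_deriv_sq_le (hBi.const_mul 2) (Ioo_subset_Icc_self hc) hx
    _ = 2 * ∫ t in a..b, B t := integral_const_mul 2 B

variable [CompleteSpace E]

theorem norm_sq_le_two_mul_integral_norm_mul_norm_deriv {x : ℝ} (hab : a < b)
    (hu : ContinuousOn u (Icc a b)) (hdiff : DifferentiableOn ℝ u (Ioo a b))
    (hint : IntervalIntegrable (fun t ↦ ‖u t‖ * ‖deriv u t‖) volume a b)
    (hmean : ∫ t in a..b, u t = 0) (hx : x ∈ Icc a b) :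
    ‖u x‖ ^ 2 ≤ 2 * ∫ t in a..b, ‖u t‖ * ‖deriv u t‖ := by
  obtain ⟨φ, hφ, hφx⟩ := exists_dual_vector'' ℝ (u x)
  have abs_φ_le (v : E) : |φ v| ≤ ‖v‖ := φ.le_of_opNorm_le_of_le hφ le_rfl |>.trans_eq (one_mul _)
  have φ_mean : ∫ t in a..b, φ (u t) = 0 := by
    rw [φ.intervalIntegral_comp_comm (hu.intervalIntegrable_of_Icc hab.le), hmean, map_zero]
  have φ_bound : ∀ t ∈ Ioo a b,
      |φ (u t)| * |deriv (φ ∘ u) t| ≤ ‖u t‖ * ‖deriv u t‖ := fun t ht ↦ by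
    have hut : DifferentiableAt ℝ u t := hdiff.differentiableAt (isOpen_Ioo.mem_nhds ht)
    rw [(φ.hasFDerivAt.comp_hasDerivAt t hut.hasDerivAt).deriv]
    gcongr <;> exact abs_φ_le _
  have φ_sq_le := sq_le_two_mul_integral_of_intervalIntegral_eq_zero hab
    (φ.continuous.comp_continuousOn hu) (φ.differentiable.comp_differentiableOn hdiff)
    φ_bound hint φ_mean hx
  simpa only [Function.comp_apply, hφx, RCLike.ofReal_real_eq_id, id_eq] using φ_sq_le

theorem norm_sq_le_two_mul_L2_mul_L2_deriv {x : ℝ} (hab : a < b)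
    (hu : ContinuousOn u (Icc a b)) (hdiff : DifferentiableOn ℝ u (Ioo a b))
    (hderiv : IntervalIntegrable (fun t ↦ ‖deriv u t‖ ^ 2) volume a b)
    (hmean : ∫ t in a..b, u t = 0) (hx : x ∈ Icc a b) :
    ‖u x‖ ^ 2 ≤ 2 * ((∫ t in a..b, ‖u t‖ ^ 2) ^ ((1 : ℝ) / 2) *
      (∫ t in a..b, ‖deriv u t‖ ^ 2) ^ ((1 : ℝ) / 2)) := by
  have u_memLp : MemLp u 2 (volume.restrict (Ioc a b)) :=
    (memLp_two_iff_integrable_sq_norm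
      ((hu.mono Ioc_subset_Icc_self).aestronglyMeasurable measurableSet_Ioc)).2
      ((hu.norm.pow 2).intervalIntegrable_of_Icc hab.le).1
  have deriv_memLp : MemLp (deriv u) 2 (volume.restrict (Ioc a b)) :=
    (memLp_two_iff_integrable_sq_norm (aestronglyMeasurable_deriv u _)).2 hderiv.1
  have mul_integrable : IntervalIntegrable (fun t ↦ ‖u t‖ * ‖deriv u t‖) volume a b :=
    (intervalIntegrable_iff_integrableOn_Ioc_of_le hab.le).2
      (u_memLp.norm.integrable_mul deriv_memLp.norm)
  refine (norm_sq_le_two_mul_integral_norm_mul_norm_deriv hab hu hdiff mul_integrable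
    hmean hx).trans ?_
  simp only [integral_of_le hab.le]
  gcongr
  exact integral_norm_mul_norm_le_L2_mul_L2 u_memLp deriv_memLp

theorem torus_gagliardo_nirenberg_general (hab : a < b)
    (hu : ContinuousOn u (Icc a b)) (hdiff : DifferentiableOn ℝ u (Ioo a b))
    (hderiv : IntervalIntegrable (fun t ↦ ‖deriv u t‖ ^ 2) volume a b)
    (hmean : ∫ t in a..b, u t = 0) :
    ∫ t in a..b, ‖u t‖ ^ 4 ≤
      2 * (∫ t in a..b, ‖u t‖ ^ 2) ^ ((3 : ℝ) / 2) *
        (∫ t in a..b, ‖deriv u t‖ ^ 2) ^ ((1 : ℝ) / 2) := by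
  set A := ∫ t in a..b, ‖u t‖ ^ 2
  set B := ∫ t in a..b, ‖deriv u t‖ ^ 2
  have A_nonneg : 0 ≤ A := integral_nonneg hab.le fun t _ ↦ sq_nonneg _
  have sup_bound : ∀ᵐ t ∂volume.restrict (Ioc a b),
      ‖u t‖ ^ 2 ≤ 2 * (A ^ ((1 : ℝ) / 2) * B ^ ((1 : ℝ) / 2)) :=
    (ae_restrict_mem measurableSet_Ioc).mono fun t ht ↦
      norm_sq_le_two_mul_L2_mul_L2_deriv hab hu hdiff hderiv hmean (Ioc_subset_Icc_self ht)
  have A_rpow : A ^ ((3 : ℝ) / 2) = A ^ ((1 : ℝ) / 2) * A := by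
    rw [← rpow_add_one' A_nonneg (by norm_num)]
    norm_num
  calc ∫ t in a..b, ‖u t‖ ^ 4 ≤ 2 * (A ^ ((1 : ℝ) / 2) * B ^ ((1 : ℝ) / 2)) * A := by
        simpa only [A, integral_of_le hab.le] using integral_norm_pow_add_le_of_norm_pow_le
          ((hu.norm.pow 2).intervalIntegrable_of_Icc hab.le).1 sup_bound
    _ = 2 * A ^ ((3 : ℝ) / 2) * B ^ ((1 : ℝ) / 2) := by
        rw [A_rpow]
        ring

/-- Gagliardo–Nirenberg-type inequality on the torus `𝕋 = ℝ/(2πℤ)` for mean-zero functions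
(the existence of the constant `C_𝕋` of Proposition 1.4): there is a `C > 0` such that
`‖u‖_{L⁴(𝕋)}⁴ ≤ C ‖u‖_{L²(𝕋)}³ ‖u'‖_{L²(𝕋)}` for all `C¹` functions `u : 𝕋 → ℂ` with
`∫_𝕋 u = 0`.  Functions on `𝕋` are realised as `2π`-periodic functions on `ℝ`, and
integrals over `𝕋` as integrals over `[0, 2π]`. -/
theorem torus_gagliardo_nirenberg :
    ∃ C : ℝ, 0 < C ∧ ∀ u : ℝ → ℂ, ContDiff ℝ 1 u → Function.Periodic u (2 * π) →
      (∫ y in (0 : ℝ)..(2 * π), u y) = 0 →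
      (∫ y in (0 : ℝ)..(2 * π), ‖u y‖ ^ 4) ≤
        C * (∫ y in (0 : ℝ)..(2 * π), ‖u y‖ ^ 2) ^ ((3 : ℝ) / 2) *
          (∫ y in (0 : ℝ)..(2 * π), ‖deriv u y‖ ^ 2) ^ ((1 : ℝ) / 2) :=
  ⟨2, two_pos, fun _ hu _ ↦ torus_gagliardo_nirenberg_general two_pi_pos hu.continuous.continuousOn
    (hu.differentiable one_ne_zero).differentiableOn
    (((hu.continuous_deriv le_rfl).norm.pow 2).intervalIntegrable _ _)⟩

end
end

section
/- Let s ∈ (1/2, 1]. There exists a constant C > 0 such that for all continuously differentiable functions u₁, u₂ : 𝕋 → ℂ one has ‖u₁u₂‖_{Ḣˢ(𝕋)} ≤ C ( ‖u₁‖_{Ḣˢ(𝕋)} ‖u₂‖_{L^∞(𝕋)} + ‖u₂‖_{Ḣˢ(𝕋)} ‖u₁‖_{L^∞(𝕋)} ), where ‖u‖_{Ḣˢ(𝕋)}² := Σ_{k∈ℤ} |k|^{2s} |û(k)|² and û(k) := (2π)^{-1/2} ∫_𝕋 u(y) e^{-iky} dy. -/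
open Real intervalIntegral

noncomputable section

/-- The `k`-th Fourier coefficient `û(k) = (2π)^{-1/2} ∫_𝕋 u(y) e^{-iky} dy` of a
`2π`-periodic function `u : ℝ → ℂ`. -/
def fourierCoef (u : ℝ → ℂ) (k : ℤ) : ℂ :=
  (((2 * π) ^ (-(1 : ℝ) / 2) : ℝ) : ℂ) *
    ∫ y in (0 : ℝ)..(2 * π), u y * Complex.exp (-Complex.I * k * y)

/-- The square of the homogeneous Sobolev norm `‖u‖_{Ḣˢ(𝕋)}² = Σ_k |k|^{2s} |û(k)|²`. -/
def sobNormSq (s : ℝ) (u : ℝ → ℂ) : ℝ :=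
  ∑' k : ℤ, |(k : ℝ)| ^ (2 * s) * ‖fourierCoef u k‖ ^ 2

/-!
For `0 < s < 1`, Parseval's identity for `u(· + h) - u`, whose `k`-th Fourier coefficient is
`(e^{ikh} - 1) û(k)`, followed by integration against `h^{-1-2s} dh` over `(0, ∞)`, identifies
`‖u‖_{Ḣˢ}²` up to a constant depending only on `s` with `∫ h^{-1-2s} ‖u(· + h) - u‖_{L²}² dh`. For
`s = 1` this integral diverges; there `‖u‖_{Ḣ¹}²` is the best constant `K` in
`‖u(· + h) - u‖_{L²}² ≤ K h²`. Either way a pointwise-in-`h` bound between increments passes to the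
Sobolev norms, and for a product such a bound comes from the Leibniz rule
`(uv)(y + h) - (uv)(y) = u(y + h) (v(y + h) - v(y)) + (u(y + h) - u(y)) v(y)`.
-/

open MeasureTheory Set Filter Topology
open scoped ENNReal NNReal

/-- `u` is the lift to `ℝ` of a function in `L²(𝕋)`. -/
structure IsPeriodicL2 (u : ℝ → ℂ) : Prop where
  periodic : Function.Periodic u (2 * π)
  aestronglyMeasurable : AEStronglyMeasurable u
  memLp : MemLp u 2 (volume.restrict (Ioc 0 (2 * π)))

/-- The extended-real-valued version of `sobNormSq`, equal to `∞` when the series diverges (where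
`sobNormSq` takes the junk value `0`). -/
def sobENormSq (s : ℝ) (u : ℝ → ℂ) : ℝ≥0∞ :=
  ∑' k : ℤ, ‖(k : ℝ)‖ₑ ^ (2 * s) * ‖fourierCoef u k‖ₑ ^ 2

/-- The squared `L²(𝕋)` norm of the increment `u(· + h) - u`. -/
def sqIncrement {E : Type*} [SeminormedAddCommGroup E] (u : ℝ → E) (h : ℝ) : ℝ≥0∞ :=
  ∫⁻ y in Ioc 0 (2 * π), ‖u (y + h) - u y‖ₑ ^ 2

/-- The constant relating the squared Gagliardo seminorm to the squared `Ḣˢ(𝕋)` norm. -/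
def gagliardoConst (s : ℝ) : ℝ≥0∞ :=
  ∫⁻ h in Ioi (0 : ℝ), ‖Complex.exp (Complex.I * h) - 1‖ₑ ^ 2 * ‖h‖ₑ ^ (-1 - 2 * s)

section

variable {s : ℝ} {u v w : ℝ → ℂ}

lemma fourierCoef_eq_mul_fourierCoeffOn (u : ℝ → ℂ) (k : ℤ) :
    fourierCoef u k = (√(2 * π) : ℂ) * fourierCoeffOn two_pi_pos u k := by
  have character_eq (y : ℝ) : (fourier (-k) (y : AddCircle (2 * π - 0)) : ℂ) • u y
      = u y * Complex.exp (-Complex.I * k * y) := by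
    have : (π : ℂ) ≠ 0 := mod_cast pi_ne_zero
    rw [fourier_coe_apply, smul_eq_mul, mul_comm]
    congr 2
    push_cast
    field_simp
    ring
  have normalization : (2 * π) ^ (-(1 : ℝ) / 2) = √(2 * π) * (1 / (2 * π - 0)) := by
    rw [neg_div, rpow_neg two_pi_pos.le, ← sqrt_eq_rpow, sub_zero, mul_one_div, sqrt_div_self]
  rw [fourierCoeffOn_eq_integral, fourierCoef, normalization, Complex.real_smul]
  simp only [character_eq]
  push_cast
  ring

lemma tsum_enorm_sq_fourierCoef (hu : MemLp u 2 (volume.restrict (Ioc 0 (2 * π)))) :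
    ∑' k, ‖fourierCoef u k‖ₑ ^ 2 = ∫⁻ y in Ioc 0 (2 * π), ‖u y‖ₑ ^ 2 := by
  have parseval : HasSum (fun k ↦ ‖fourierCoef u k‖ ^ 2) (∫ y in Ioc 0 (2 * π), ‖u y‖ ^ 2) := by
    convert! (hasSum_sq_fourierCoeffOn two_pi_pos hu).mul_left (2 * π) using 1
    · ext k
      rw [fourierCoef_eq_mul_fourierCoeffOn, norm_mul, mul_pow, Complex.norm_real, norm_eq_abs,
        sq_abs, sq_sqrt two_pi_pos.le]
    · rw [integral_of_le two_pi_pos.le, sub_zero, smul_eq_mul, mul_inv_cancel_left₀ two_pi_pos.ne']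
  have enorm_sq (z : ℂ) : ‖z‖ₑ ^ 2 = ENNReal.ofReal (‖z‖ ^ 2) := by
    rw [ENNReal.ofReal_pow (norm_nonneg z), ofReal_norm]
  simp only [enorm_sq]
  rw [← ENNReal.ofReal_tsum_of_nonneg (fun k ↦ by positivity) parseval.summable, parseval.tsum_eq,
    ofReal_integral_eq_lintegral_ofReal hu.integrable_norm_pow' (ae_of_all _ fun y ↦ by positivity)]

lemma aestronglyMeasurable_comp_add_right {G E : Type*} [AddGroup G] [MeasurableSpace G]
    [MeasurableAdd G] {μ : Measure G} [μ.IsAddRightInvariant] [TopologicalSpace E] {f : G → E}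
    (hf : AEStronglyMeasurable f μ) (h : G) : AEStronglyMeasurable (fun y ↦ f (y + h)) μ :=
  hf.comp_measurePreserving (measurePreserving_add_right μ h)

namespace IsPeriodicL2

lemma comp_add_right (hu : IsPeriodicL2 u) (h : ℝ) : IsPeriodicL2 fun y ↦ u (y + h) where
  periodic y := by simp only [add_right_comm y, hu.periodic (y + h)]
  aestronglyMeasurable := aestronglyMeasurable_comp_add_right hu.aestronglyMeasurable h
  memLp := by
    have periodic_sq : Function.Periodic (fun y ↦ ‖u y‖ ^ 2) (2 * π) := fun y ↦ by
      simp only [hu.periodic y]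
    have integrable_sq : IntervalIntegrable (fun y ↦ ‖u y‖ ^ 2) volume 0 (2 * π) :=
      (intervalIntegrable_iff_integrableOn_Ioc_of_le two_pi_pos.le).2 hu.memLp.integrable_norm_pow'
    rw [memLp_two_iff_integrable_sq_norm (aestronglyMeasurable_comp_add_right
      hu.aestronglyMeasurable h).restrict]
    refine (intervalIntegrable_iff_integrableOn_Ioc_of_le two_pi_pos.le).1 ?_
    exact (IntervalIntegrable.comp_add_right_iff (f := fun y ↦ ‖u y‖ ^ 2)).2
      (periodic_sq.intervalIntegrable₀ two_pi_pos.ne' integrable_sq _ _)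

lemma sub (hu : IsPeriodicL2 u) (hv : IsPeriodicL2 v) : IsPeriodicL2 fun y ↦ u y - v y where
  periodic := hu.periodic.sub hv.periodic
  aestronglyMeasurable := hu.aestronglyMeasurable.sub hv.aestronglyMeasurable
  memLp := hu.memLp.sub hv.memLp

lemma of_bddAbove (hu : AEStronglyMeasurable u) (hbdd : BddAbove (range fun y ↦ ‖u y‖))
    (hp : Function.Periodic u (2 * π)) : IsPeriodicL2 u where
  periodic := hp
  aestronglyMeasurable := hu
  memLp := .of_bound hu.restrict (⨆ y, ‖u y‖) (ae_of_all _ (le_ciSup hbdd))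

lemma mul_of_bound (hu : IsPeriodicL2 u) (hv : IsPeriodicL2 v) {M : ℝ≥0} (hM : ∀ y, ‖u y‖₊ ≤ M) :
    IsPeriodicL2 fun y ↦ u y * v y where
  periodic := hu.periodic.mul hv.periodic
  aestronglyMeasurable := hu.aestronglyMeasurable.mul hv.aestronglyMeasurable
  memLp := hv.memLp.of_le_mul (c := M)
    (hu.aestronglyMeasurable.mul hv.aestronglyMeasurable).restrict
    (ae_of_all _ fun y ↦ by rw [norm_mul]; gcongr; exact hM y)

lemma intervalIntegrable (hu : IsPeriodicL2 u) : IntervalIntegrable u volume 0 (2 * π) :=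
  (intervalIntegrable_iff_integrableOn_Ioc_of_le two_pi_pos.le).2
    (hu.memLp.integrable one_le_two)

end IsPeriodicL2

lemma fourierCoef_sub (hu : IntervalIntegrable u volume 0 (2 * π))
    (hv : IntervalIntegrable v volume 0 (2 * π)) (k : ℤ) :
    fourierCoef (fun y ↦ u y - v y) k = fourierCoef u k - fourierCoef v k := by
  have character_continuous : Continuous fun y : ℝ ↦ Complex.exp (-Complex.I * k * y) := by fun_prop
  simp only [fourierCoef, sub_mul]
  rw [intervalIntegral.integral_sub (hu.mul_continuousOn character_continuous.continuousOn)
    (hv.mul_continuousOn character_continuous.continuousOn), mul_sub]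

lemma fourierCoef_comp_add_right (hp : Function.Periodic u (2 * π)) (h : ℝ) (k : ℤ) :
    fourierCoef (fun y ↦ u (y + h)) k
      = Complex.exp (Complex.I * (k * h : ℝ)) * fourierCoef u k := by
  set f : ℝ → ℂ := fun y ↦ u y * Complex.exp (-Complex.I * k * y) with hf
  have periodic_f : Function.Periodic f (2 * π) := fun y ↦ by
    simp only [hf, hp y]
    congr 1
    rw [Complex.exp_eq_exp_iff_exists_int]
    exact ⟨-k, by push_cast; ring⟩
  have shifted_integrand (y : ℝ) : u (y + h) * Complex.exp (-Complex.I * k * y)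
      = Complex.exp (Complex.I * (k * h : ℝ)) * f (y + h) := by
    rw [hf, mul_left_comm, ← Complex.exp_add]
    congr 2
    push_cast
    ring
  have shifted_period : ∫ y in 0..2 * π, f (y + h) = ∫ y in 0..2 * π, f y := by
    rw [intervalIntegral.integral_comp_add_right, zero_add, add_comm,
      periodic_f.intervalIntegral_add_eq h 0, zero_add]
  simp only [fourierCoef, shifted_integrand]
  rw [intervalIntegral.integral_const_mul, shifted_period, mul_left_comm]

lemma sqIncrement_eq_tsum (hu : IsPeriodicL2 u) (h : ℝ) :
    sqIncrement u h = ∑' k : ℤ,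
      ‖Complex.exp (Complex.I * (k * h : ℝ)) - 1‖ₑ ^ 2 * ‖fourierCoef u k‖ₑ ^ 2 := by
  have hshift := hu.comp_add_right h
  rw [sqIncrement, ← tsum_enorm_sq_fourierCoef (hshift.sub hu).memLp]
  refine tsum_congr fun k ↦ ?_
  rw [fourierCoef_sub hshift.intervalIntegrable hu.intervalIntegrable,
    fourierCoef_comp_add_right hu.periodic, ← sub_one_mul, enorm_mul, mul_pow]

lemma measurable_sqIncrement (hu : IsPeriodicL2 u) : Measurable (sqIncrement u) := by
  rw [funext (sqIncrement_eq_tsum hu)]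
  fun_prop

lemma gagliardoConst_ne_zero (s : ℝ) : gagliardoConst s ≠ 0 := by
  have support_pos : Ioo (0 : ℝ) 1 ⊆ (Function.support fun h : ℝ ↦
      ‖Complex.exp (Complex.I * h) - 1‖ₑ ^ 2 * ‖h‖ₑ ^ (-1 - 2 * s)) ∩ Ioi 0 := by
    rintro h ⟨h_pos, h_lt⟩
    have sin_pos : 0 < sin (h / 2) :=
      sin_pos_of_pos_of_lt_pi (by linarith) (by linarith [pi_gt_three])
    have chord_ne : ‖Complex.exp (Complex.I * h) - 1‖ₑ ≠ 0 := by
      rw [enorm_ne_zero, ← norm_ne_zero_iff, Complex.norm_exp_I_mul_ofReal_sub_one,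
        norm_ne_zero_iff]
      positivity
    have kernel_ne : ‖h‖ₑ ^ (-1 - 2 * s) ≠ 0 :=
      (ENNReal.rpow_pos (enorm_pos.2 h_pos.ne') enorm_ne_top).ne'
    exact ⟨mul_ne_zero (pow_ne_zero 2 chord_ne) kernel_ne, h_pos⟩
  have measurable_integrand : Measurable fun h : ℝ ↦
      ‖Complex.exp (Complex.I * h) - 1‖ₑ ^ 2 * ‖h‖ₑ ^ (-1 - 2 * s) := by fun_prop
  refine ((setLIntegral_pos_iff measurable_integrand).2 ?_).ne'
  exact (by simp : 0 < volume (Ioo (0 : ℝ) 1)).trans_le (measure_mono support_pos)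

lemma lintegral_enorm_rpow_ne_top {S : Set ℝ} {p : ℝ} (hS : MeasurableSet S) (hpos : S ⊆ Ioi 0)
    (hint : IntegrableOn (fun h ↦ h ^ p) S) : ∫⁻ h in S, ‖h‖ₑ ^ p ≠ ∞ := by
  have enorm_rpow (h : ℝ) (hh : h ∈ S) : ‖h‖ₑ ^ p = ‖h ^ p‖ₑ := by
    have h_pos : 0 < h := hpos hh
    rw [enorm_of_nonneg h_pos.le, enorm_of_nonneg (by positivity), ENNReal.ofReal_rpow_of_pos h_pos]
  rw [setLIntegral_congr_fun hS enorm_rpow]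
  exact hint.2.ne

lemma gagliardoConst_ne_top (hs₀ : 0 < s) (hs₁ : s < 1) : gagliardoConst s ≠ ∞ := by
  have near_zero : ∫⁻ h in Ioo (0 : ℝ) 1,
      ‖Complex.exp (Complex.I * h) - 1‖ₑ ^ 2 * ‖h‖ₑ ^ (-1 - 2 * s) ≠ ∞ := by
    refine ne_top_of_le_ne_top (lintegral_enorm_rpow_ne_top measurableSet_Ioo Ioo_subset_Ioi_self
      ((integrableOn_Ioo_rpow_iff (s := 1 - 2 * s) one_pos).2 (by linarith))) ?_
    refine setLIntegral_mono' measurableSet_Ioo fun h hh ↦ ?_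
    calc ‖Complex.exp (Complex.I * h) - 1‖ₑ ^ 2 * ‖h‖ₑ ^ (-1 - 2 * s)
        ≤ ‖h‖ₑ ^ 2 * ‖h‖ₑ ^ (-1 - 2 * s) := by gcongr; exact enorm_exp_I_mul_ofReal_sub_one_le
      _ = ‖h‖ₑ ^ (1 - 2 * s) := by
        rw [← ENNReal.rpow_two, ← ENNReal.rpow_add _ _ (enorm_ne_zero.2 hh.1.ne') enorm_ne_top]
        ring_nf
  have near_infinity : ∫⁻ h in Ici (1 : ℝ),
      ‖Complex.exp (Complex.I * h) - 1‖ₑ ^ 2 * ‖h‖ₑ ^ (-1 - 2 * s) ≠ ∞ := by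
    refine ne_top_of_le_ne_top (ENNReal.mul_ne_top (by simp : (2 : ℝ≥0∞) ^ 2 ≠ ∞)
      (lintegral_enorm_rpow_ne_top measurableSet_Ici (Ici_subset_Ioi.2 one_pos)
        ((integrableOn_Ici_iff_integrableOn_Ioi).2
          (integrableOn_Ioi_rpow_of_lt (by linarith : -1 - 2 * s < -1) one_pos)))) ?_
    rw [← lintegral_const_mul _ (by fun_prop)]
    refine lintegral_mono fun h ↦ ?_
    gcongr
    calc ‖Complex.exp (Complex.I * h) - 1‖ₑ
        ≤ ‖Complex.exp (Complex.I * h)‖ₑ + ‖(1 : ℂ)‖ₑ := enorm_sub_le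
      _ = 2 := by rw [Complex.enorm_exp_I_mul_ofReal, enorm_one, one_add_one_eq_two]
  rw [gagliardoConst, ← Ioo_union_Ici_eq_Ioi one_pos]
  exact ne_top_of_le_ne_top (ENNReal.add_ne_top.2 ⟨near_zero, near_infinity⟩)
    (lintegral_union_le _ _ _)

lemma lintegral_Ioi_comp_mul_left (f : ℝ → ℝ≥0∞) {a : ℝ} (ha : 0 < a) :
    ‖a‖ₑ * ∫⁻ h in Ioi 0, f (a * h) = ∫⁻ h in Ioi 0, f h := by
  have embedding : MeasurableEmbedding (a * ·) := measurableEmbedding_mulLeft₀ ha.ne'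
  have preimage_Ioi : (a * ·) ⁻¹' Ioi (0 : ℝ) = Ioi 0 := by
    ext h
    simp [ha]
  conv_rhs => rw [← smul_map_volume_mul_left ha.ne']
  rw [Measure.restrict_smul, lintegral_smul_measure, embedding.restrict_map,
    embedding.lintegral_map, preimage_Ioi, smul_eq_mul, enorm_eq_ofReal_abs]

lemma enorm_exp_I_mul_abs_sub_one (t : ℝ) :
    ‖Complex.exp (Complex.I * |t|) - 1‖ₑ = ‖Complex.exp (Complex.I * t) - 1‖ₑ := by
  rw [← ofReal_norm, ← ofReal_norm, Complex.norm_exp_I_mul_ofReal_sub_one,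
    Complex.norm_exp_I_mul_ofReal_sub_one]
  obtain ht | ht := abs_choice t <;> simp [ht, neg_div]

lemma lintegral_enorm_exp_sub_one_sq_mul_rpow (hs : 0 < s) (x : ℝ) :
    ∫⁻ h in Ioi (0 : ℝ), ‖Complex.exp (Complex.I * (x * h : ℝ)) - 1‖ₑ ^ 2 * ‖h‖ₑ ^ (-1 - 2 * s)
      = gagliardoConst s * ‖x‖ₑ ^ (2 * s) := by
  obtain rfl | hx := eq_or_ne x 0
  · simp [hs]
  have integrand_eq (h : ℝ) (hh : h ∈ Ioi 0) :
      ‖Complex.exp (Complex.I * (x * h : ℝ)) - 1‖ₑ ^ 2 * ‖h‖ₑ ^ (-1 - 2 * s)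
        = ‖Complex.exp (Complex.I * (|x| * h : ℝ)) - 1‖ₑ ^ 2 * ‖|x| * h‖ₑ ^ (-1 - 2 * s)
          * ‖x‖ₑ ^ (1 + 2 * s) := by
    have h_pos : 0 < h := hh
    have kernel_scale : ‖|x| * h‖ₑ ^ (-1 - 2 * s) * ‖x‖ₑ ^ (1 + 2 * s) = ‖h‖ₑ ^ (-1 - 2 * s) := by
      rw [enorm_mul, enorm_abs, ENNReal.mul_rpow_of_ne_top enorm_ne_top enorm_ne_top,
        mul_right_comm, ← ENNReal.rpow_add _ _ (enorm_ne_zero.2 hx) enorm_ne_top]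
      simp
    rw [mul_assoc, kernel_scale, ← enorm_exp_I_mul_abs_sub_one (x * h), abs_mul, abs_of_pos h_pos]
  have scaling := lintegral_Ioi_comp_mul_left
    (fun h ↦ ‖Complex.exp (Complex.I * h) - 1‖ₑ ^ 2 * ‖h‖ₑ ^ (-1 - 2 * s)) (abs_pos.2 hx)
  rw [setLIntegral_congr_fun measurableSet_Ioi integrand_eq, lintegral_mul_const _ (by fun_prop),
    gagliardoConst, ← scaling, enorm_abs, ENNReal.rpow_add _ _ (enorm_ne_zero.2 hx) enorm_ne_top,
    ENNReal.rpow_one]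
  ring

theorem lintegral_sqIncrement_mul_rpow (hs : 0 < s) (hu : IsPeriodicL2 u) :
    ∫⁻ h in Ioi (0 : ℝ), sqIncrement u h * ‖h‖ₑ ^ (-1 - 2 * s)
      = gagliardoConst s * sobENormSq s u := by
  simp only [sqIncrement_eq_tsum hu, ← ENNReal.tsum_mul_right]
  rw [lintegral_tsum fun k ↦ by fun_prop, sobENormSq, ← ENNReal.tsum_mul_left]
  refine tsum_congr fun k ↦ ?_
  simp only [mul_right_comm _ (‖fourierCoef u k‖ₑ ^ 2)]
  rw [lintegral_mul_const _ (by fun_prop), lintegral_enorm_exp_sub_one_sq_mul_rpow hs, mul_assoc]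

lemma tendsto_enorm_slope_exp (x : ℝ) :
    Tendsto (fun h : ℝ ↦ ‖h⁻¹‖ₑ ^ 2 * ‖Complex.exp (Complex.I * (x * h : ℝ)) - 1‖ₑ ^ 2) (𝓝[≠] 0)
      (𝓝 (‖x‖ₑ ^ 2)) := by
  have exp_deriv : HasDerivAt (fun h : ℝ ↦ Complex.exp (Complex.I * (x * h : ℝ)))
      (Complex.I * x) 0 := by
    have phase_deriv : HasDerivAt (fun h : ℝ ↦ Complex.I * (x * h : ℝ)) (Complex.I * x) 0 := by
      simpa using (((hasDerivAt_id (0 : ℝ)).const_mul x).ofReal_comp).const_mul Complex.I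
    simpa using phase_deriv.cexp
  have enorm_I_mul : ‖Complex.I * x‖ₑ = ‖x‖ₑ := by
    rw [← ofReal_norm, ← ofReal_norm, norm_mul, Complex.norm_I, one_mul, Complex.norm_real]
  simpa only [Function.comp_def, zero_add, mul_zero, Complex.ofReal_zero, Complex.exp_zero,
    enorm_smul, mul_pow, enorm_I_mul] using ((ENNReal.continuous_pow 2).tendsto _).comp
      exp_deriv.tendsto_slope_zero.enorm

lemma sobENormSq_one (u : ℝ → ℂ) :
    sobENormSq 1 u = ∑' k : ℤ, ‖(k : ℝ)‖ₑ ^ 2 * ‖fourierCoef u k‖ₑ ^ 2 := by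
  simp only [sobENormSq, mul_one, ENNReal.rpow_two]

lemma sqIncrement_le_sobENormSq_one (hu : IsPeriodicL2 u) (h : ℝ) :
    sqIncrement u h ≤ sobENormSq 1 u * ‖h‖ₑ ^ 2 := by
  rw [sqIncrement_eq_tsum hu, sobENormSq_one, ← ENNReal.tsum_mul_right]
  refine ENNReal.tsum_le_tsum fun k ↦ ?_
  rw [mul_right_comm, ← mul_pow ‖(k : ℝ)‖ₑ, ← enorm_mul]
  gcongr
  exact enorm_exp_I_mul_ofReal_sub_one_le

lemma sobENormSq_one_le_of_sqIncrement_le (hu : IsPeriodicL2 u) {K : ℝ≥0∞}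
    (hK : ∀ h, sqIncrement u h ≤ K * ‖h‖ₑ ^ 2) : sobENormSq 1 u ≤ K := by
  rw [sobENormSq_one]
  refine ENNReal.summable.tsum_le_of_sum_le fun F ↦ ?_
  refine le_of_tendsto (tendsto_finsetSum F fun (k : ℤ) _ ↦
    ENNReal.Tendsto.mul_const (tendsto_enorm_slope_exp k) (.inr (by finiteness))) ?_
  filter_upwards [self_mem_nhdsWithin] with h hh
  calc ∑ k ∈ F, ‖h⁻¹‖ₑ ^ 2 * ‖Complex.exp (Complex.I * (k * h : ℝ)) - 1‖ₑ ^ 2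
          * ‖fourierCoef u k‖ₑ ^ 2
      ≤ ‖h⁻¹‖ₑ ^ 2 * sqIncrement u h := by
        simp only [mul_assoc, ← Finset.mul_sum]
        rw [sqIncrement_eq_tsum hu]
        gcongr
        exact ENNReal.sum_le_tsum F
    _ ≤ ‖h⁻¹‖ₑ ^ 2 * (K * ‖h‖ₑ ^ 2) := by gcongr; exact hK h
    _ = K := by
        rw [mul_left_comm, ← mul_pow, ← enorm_mul, inv_mul_cancel₀ hh, enorm_one, one_pow, mul_one]

lemma sobENormSq_le_sobENormSq_one (hs₀ : 0 < s) (hs₁ : s ≤ 1) (u : ℝ → ℂ) :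
    sobENormSq s u ≤ sobENormSq 1 u := by
  refine ENNReal.tsum_le_tsum fun k ↦ ?_
  gcongr ?_ * _
  obtain rfl | hk := eq_or_ne k 0
  · simp [hs₀]
  · have one_le : 1 ≤ ‖(k : ℝ)‖ₑ := by
      rw [enorm_eq_ofReal_abs, ENNReal.one_le_ofReal]
      exact mod_cast Int.one_le_abs hk
    exact ENNReal.rpow_le_rpow_of_exponent_le one_le (by linarith)

theorem sobENormSq_le_of_sqIncrement_le (hs₀ : 0 < s) (hs₁ : s ≤ 1) (hw : IsPeriodicL2 w)
    (hu : IsPeriodicL2 u) (hv : IsPeriodicL2 v) {A B : ℝ≥0∞}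
    (hle : ∀ h, sqIncrement w h ≤ A * sqIncrement u h + B * sqIncrement v h) :
    sobENormSq s w ≤ A * sobENormSq s u + B * sobENormSq s v := by
  obtain hs₁ | rfl := hs₁.lt_or_eq
  · have hu_meas := measurable_sqIncrement hu
    have hv_meas := measurable_sqIncrement hv
    rw [← ENNReal.mul_le_mul_iff_right (gagliardoConst_ne_zero s) (gagliardoConst_ne_top hs₀ hs₁)]
    calc gagliardoConst s * sobENormSq s w
        = ∫⁻ h in Ioi (0 : ℝ), sqIncrement w h * ‖h‖ₑ ^ (-1 - 2 * s) :=
          (lintegral_sqIncrement_mul_rpow hs₀ hw).symm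
      _ ≤ ∫⁻ h in Ioi (0 : ℝ), (A * (sqIncrement u h * ‖h‖ₑ ^ (-1 - 2 * s))
            + B * (sqIncrement v h * ‖h‖ₑ ^ (-1 - 2 * s))) := by
          refine lintegral_mono fun h ↦ ?_
          rw [← mul_assoc, ← mul_assoc, ← add_mul]
          gcongr
          exact hle h
      _ = gagliardoConst s * (A * sobENormSq s u + B * sobENormSq s v) := by
          rw [lintegral_add_left (by fun_prop), lintegral_const_mul _ (by fun_prop),
            lintegral_const_mul _ (by fun_prop), lintegral_sqIncrement_mul_rpow hs₀ hu,
            lintegral_sqIncrement_mul_rpow hs₀ hv]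
          ring
  · refine sobENormSq_one_le_of_sqIncrement_le hw fun h ↦ (hle h).trans ?_
    calc A * sqIncrement u h + B * sqIncrement v h
        ≤ A * (sobENormSq 1 u * ‖h‖ₑ ^ 2) + B * (sobENormSq 1 v * ‖h‖ₑ ^ 2) := by
          gcongr <;> exact sqIncrement_le_sobENormSq_one ‹_› h
      _ = (A * sobENormSq 1 u + B * sobENormSq 1 v) * ‖h‖ₑ ^ 2 := by ring

lemma nnnorm_mul_sub_mul_sq_le {R : Type*} [NonUnitalSeminormedRing R] (a a' b b' : R) :
    ‖a' * b' - a * b‖₊ ^ 2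
      ≤ 2 * ‖a'‖₊ ^ 2 * ‖b' - b‖₊ ^ 2 + 2 * ‖b‖₊ ^ 2 * ‖a' - a‖₊ ^ 2 := by
  have leibniz : a' * b' - a * b = a' * (b' - b) + (a' - a) * b := by noncomm_ring
  calc ‖a' * b' - a * b‖₊ ^ 2
      ≤ (‖a'‖₊ * ‖b' - b‖₊ + ‖a' - a‖₊ * ‖b‖₊) ^ 2 := by
        rw [leibniz]
        gcongr
        exact (nnnorm_add_le _ _).trans (add_le_add (nnnorm_mul_le _ _) (nnnorm_mul_le _ _))
    _ ≤ 2 * ((‖a'‖₊ * ‖b' - b‖₊) ^ 2 + (‖a' - a‖₊ * ‖b‖₊) ^ 2) := add_sq_le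
    _ = 2 * ‖a'‖₊ ^ 2 * ‖b' - b‖₊ ^ 2 + 2 * ‖b‖₊ ^ 2 * ‖a' - a‖₊ ^ 2 := by ring

lemma sqIncrement_mul_le {R : Type*} [NonUnitalSeminormedRing R] {f g : ℝ → R} {M N : ℝ≥0}
    (hg : AEStronglyMeasurable g) (hM : ∀ y, ‖f y‖₊ ≤ M) (hN : ∀ y, ‖g y‖₊ ≤ N) (h : ℝ) :
    sqIncrement (fun y ↦ f y * g y) h
      ≤ 2 * M ^ 2 * sqIncrement g h + 2 * N ^ 2 * sqIncrement f h := by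
  have increment_sq : AEMeasurable (fun y ↦ ‖g (y + h) - g y‖ₑ ^ 2)
      (volume.restrict (Ioc 0 (2 * π))) :=
    ((aestronglyMeasurable_comp_add_right hg h).sub hg).restrict.enorm.pow_const 2
  have pointwise (y : ℝ) : ‖f (y + h) * g (y + h) - f y * g y‖ₑ ^ 2
      ≤ 2 * M ^ 2 * ‖g (y + h) - g y‖ₑ ^ 2 + 2 * N ^ 2 * ‖f (y + h) - f y‖ₑ ^ 2 := by
    simp only [enorm_eq_nnnorm]
    norm_cast
    refine (nnnorm_mul_sub_mul_sq_le _ _ _ _).trans ?_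
    gcongr
    exacts [hM _, hN _]
  calc sqIncrement (fun y ↦ f y * g y) h
      ≤ ∫⁻ y in Ioc 0 (2 * π), (2 * M ^ 2 * ‖g (y + h) - g y‖ₑ ^ 2
          + 2 * N ^ 2 * ‖f (y + h) - f y‖ₑ ^ 2) := lintegral_mono pointwise
    _ = 2 * M ^ 2 * sqIncrement g h + 2 * N ^ 2 * sqIncrement f h := by
        rw [lintegral_add_left' (increment_sq.const_mul _),
          lintegral_const_mul' _ _ (by finiteness), lintegral_const_mul' _ _ (by finiteness),
          sqIncrement, sqIncrement]

theorem sobENormSq_mul_le (hs₀ : 0 < s) (hs₁ : s ≤ 1) (hu : IsPeriodicL2 u) (hv : IsPeriodicL2 v)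
    {M N : ℝ≥0} (hM : ∀ y, ‖u y‖₊ ≤ M) (hN : ∀ y, ‖v y‖₊ ≤ N) :
    sobENormSq s (fun y ↦ u y * v y) ≤ 2 * M ^ 2 * sobENormSq s v + 2 * N ^ 2 * sobENormSq s u :=
  sobENormSq_le_of_sqIncrement_le hs₀ hs₁ (hu.mul_of_bound hv hM) hv hu <|
    sqIncrement_mul_le hv.aestronglyMeasurable hM hN

lemma sobNormSq_nonneg (s : ℝ) (u : ℝ → ℂ) : 0 ≤ sobNormSq s u :=
  tsum_nonneg fun _ ↦ by positivity

lemma sobNormSq_term_eq_toReal (s : ℝ) (u : ℝ → ℂ) (k : ℤ) :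
    |(k : ℝ)| ^ (2 * s) * ‖fourierCoef u k‖ ^ 2
      = (‖(k : ℝ)‖ₑ ^ (2 * s) * ‖fourierCoef u k‖ₑ ^ 2).toReal := by
  rw [ENNReal.toReal_mul, ← ENNReal.toReal_rpow, ENNReal.toReal_pow, toReal_enorm, toReal_enorm,
    norm_eq_abs]

lemma sobNormSq_eq_toReal (hs : 0 ≤ s) (u : ℝ → ℂ) : sobNormSq s u = (sobENormSq s u).toReal := by
  rw [sobENormSq, ENNReal.tsum_toReal_eq fun k ↦ by finiteness]
  exact tsum_congr (sobNormSq_term_eq_toReal s u)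

lemma summable_sobNormSq_iff (hs : 0 ≤ s) :
    Summable (fun k : ℤ ↦ |(k : ℝ)| ^ (2 * s) * ‖fourierCoef u k‖ ^ 2) ↔ sobENormSq s u ≠ ∞ := by
  simp only [sobNormSq_term_eq_toReal, sobENormSq]
  refine ⟨fun hsum ↦ ?_, ENNReal.summable_toReal⟩
  have := hsum.tsum_ofReal_ne_top
  simpa (disch := finiteness) only [ENNReal.ofReal_toReal] using this

lemma sqIncrement_le_of_lipschitzWith {E : Type*} [SeminormedAddCommGroup E] {f : ℝ → E} {K : ℝ≥0}
    (hf : LipschitzWith K f) (h : ℝ) :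
    sqIncrement f h ≤ ENNReal.ofReal (2 * π) * K ^ 2 * ‖h‖ₑ ^ 2 := by
  have increment_le (y : ℝ) : ‖f (y + h) - f y‖ₑ ≤ K * ‖h‖ₑ := by
    simpa [edist_eq_enorm_sub] using hf (y + h) y
  calc sqIncrement f h ≤ ∫⁻ _ in Ioc 0 (2 * π), (K * ‖h‖ₑ) ^ 2 :=
        lintegral_mono fun y ↦ by gcongr; exact increment_le y
    _ = ENNReal.ofReal (2 * π) * K ^ 2 * ‖h‖ₑ ^ 2 := by
        rw [setLIntegral_const, volume_Ioc, sub_zero]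
        ring

lemma exists_lipschitzWith_of_contDiff_of_periodic {E : Type*} [NormedAddCommGroup E]
    [NormedSpace ℝ E] {f : ℝ → E} {T : ℝ} (hT : T ≠ 0) (hf : ContDiff ℝ 1 f)
    (hp : Function.Periodic f T) : ∃ K, LipschitzWith K f := by
  have deriv_periodic : Function.Periodic (deriv f) T := fun y ↦ by
    rw [← deriv_comp_add_const, funext hp]
  obtain ⟨K, hK⟩ := (deriv_periodic.isBounded_of_continuous hT
    (hf.continuous_deriv le_rfl)).exists_norm_le
  refine ⟨K.toNNReal, lipschitzWith_of_nnnorm_deriv_le (hf.differentiable one_ne_zero) fun y ↦ ?_⟩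
  exact NNReal.le_toNNReal_of_coe_le (hK _ (mem_range_self y))

lemma bddAbove_range_norm_of_continuous_of_periodic {E : Type*} [SeminormedAddCommGroup E]
    {f : ℝ → E} {T : ℝ} (hT : T ≠ 0) (hf : Continuous f) (hp : Function.Periodic f T) :
    BddAbove (range fun y ↦ ‖f y‖) :=
  ((hp.comp norm).isBounded_of_continuous hT hf.norm).bddAbove

theorem summable_sobNormSq_of_contDiff (hs₀ : 0 < s) (hs₁ : s ≤ 1) (hu : ContDiff ℝ 1 u)
    (hp : Function.Periodic u (2 * π)) :
    Summable fun k : ℤ ↦ |(k : ℝ)| ^ (2 * s) * ‖fourierCoef u k‖ ^ 2 := by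
  obtain ⟨K, hK⟩ := exists_lipschitzWith_of_contDiff_of_periodic two_pi_pos.ne' hu hp
  have hu2 : IsPeriodicL2 u := .of_bddAbove hu.continuous.aestronglyMeasurable
    (bddAbove_range_norm_of_continuous_of_periodic two_pi_pos.ne' hu.continuous hp) hp
  rw [summable_sobNormSq_iff hs₀.le]
  refine ne_top_of_le_ne_top ?_ ((sobENormSq_le_sobENormSq_one hs₀ hs₁ u).trans
    (sobENormSq_one_le_of_sqIncrement_le hu2 (sqIncrement_le_of_lipschitzWith hK)))
  finiteness

theorem fractional_product_rule_general (hs₀ : 0 < s) (hs₁ : s ≤ 1)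
    (hu : AEStronglyMeasurable u) (hv : AEStronglyMeasurable v)
    (hu_bdd : BddAbove (range fun y ↦ ‖u y‖)) (hv_bdd : BddAbove (range fun y ↦ ‖v y‖))
    (hu_per : Function.Periodic u (2 * π)) (hv_per : Function.Periodic v (2 * π))
    (hu_sum : Summable fun k : ℤ ↦ |(k : ℝ)| ^ (2 * s) * ‖fourierCoef u k‖ ^ 2)
    (hv_sum : Summable fun k : ℤ ↦ |(k : ℝ)| ^ (2 * s) * ‖fourierCoef v k‖ ^ 2) :
    (Summable fun k : ℤ ↦ |(k : ℝ)| ^ (2 * s) * ‖fourierCoef (fun y ↦ u y * v y) k‖ ^ 2) ∧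
      √(sobNormSq s fun y ↦ u y * v y)
        ≤ √2 * (√(sobNormSq s u) * (⨆ y, ‖v y‖) + √(sobNormSq s v) * (⨆ y, ‖u y‖)) := by
  lift ⨆ y, ‖u y‖ to ℝ≥0 using iSup_nonneg fun y ↦ norm_nonneg _ with M hM
  lift ⨆ y, ‖v y‖ to ℝ≥0 using iSup_nonneg fun y ↦ norm_nonneg _ with N hN
  have hle := sobENormSq_mul_le hs₀ hs₁ (.of_bddAbove hu hu_bdd hu_per)
    (.of_bddAbove hv hv_bdd hv_per) (M := M) (N := N)
    (fun y ↦ (le_ciSup hu_bdd y).trans_eq hM.symm) (fun y ↦ (le_ciSup hv_bdd y).trans_eq hN.symm)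
  rw [summable_sobNormSq_iff hs₀.le] at hu_sum hv_sum ⊢
  have bound_ne_top : 2 * M ^ 2 * sobENormSq s v + 2 * N ^ 2 * sobENormSq s u ≠ ∞ := by finiteness
  refine ⟨ne_top_of_le_ne_top bound_ne_top hle, ?_⟩
  have hle_real : sobNormSq s (fun y ↦ u y * v y)
      ≤ 2 * M ^ 2 * sobNormSq s v + 2 * N ^ 2 * sobNormSq s u := by
    simp only [sobNormSq_eq_toReal hs₀.le]
    convert! ENNReal.toReal_mono bound_ne_top hle using 1
    rw [ENNReal.toReal_add (by finiteness) (by finiteness)]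
    simp
  have hu_sq : √(sobNormSq s u) ^ 2 = sobNormSq s u := sq_sqrt (sobNormSq_nonneg s u)
  have hv_sq : √(sobNormSq s v) ^ 2 = sobNormSq s v := sq_sqrt (sobNormSq_nonneg s v)
  have cross_nonneg : 0 ≤ √(sobNormSq s u) * N * (√(sobNormSq s v) * M) := by positivity
  refine sqrt_le_iff.2 ⟨by positivity, ?_⟩
  rw [mul_pow, sq_sqrt zero_le_two]
  linear_combination hle_real + 4 * cross_nonneg - 2 * (N : ℝ) ^ 2 * hu_sq - 2 * (M : ℝ) ^ 2 * hv_sq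

end

/-- Lemma 3.2 (fractional calculus on `𝕋`), bilinear version: for `s ∈ (1/2, 1]` there is a
constant `C > 0` such that
`‖u₁u₂‖_{Ḣˢ} ≤ C (‖u₁‖_{Ḣˢ} ‖u₂‖_{L^∞} + ‖u₂‖_{Ḣˢ} ‖u₁‖_{L^∞})`
for all `C¹` functions `u₁ u₂ : 𝕋 → ℂ`. -/
theorem fractional_product_rule (s : ℝ) (hs1 : 1 / 2 < s) (hs2 : s ≤ 1) :
    ∃ C : ℝ, 0 < C ∧ ∀ u₁ u₂ : ℝ → ℂ, ContDiff ℝ 1 u₁ → ContDiff ℝ 1 u₂ →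
      Function.Periodic u₁ (2 * π) → Function.Periodic u₂ (2 * π) →
      Real.sqrt (sobNormSq s (fun y => u₁ y * u₂ y)) ≤
        C * (Real.sqrt (sobNormSq s u₁) * (⨆ y : ℝ, ‖u₂ y‖) +
          Real.sqrt (sobNormSq s u₂) * (⨆ y : ℝ, ‖u₁ y‖)) := by
  refine ⟨√2, by positivity, fun u₁ u₂ h₁ h₂ hp₁ hp₂ ↦ ?_⟩
  have hs : 0 < s := by linarith
  exact (fractional_product_rule_general hs hs2
    h₁.continuous.aestronglyMeasurable h₂.continuous.aestronglyMeasurable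
    (bddAbove_range_norm_of_continuous_of_periodic two_pi_pos.ne' h₁.continuous hp₁)
    (bddAbove_range_norm_of_continuous_of_periodic two_pi_pos.ne' h₂.continuous hp₂) hp₁ hp₂
    (summable_sobNormSq_of_contDiff hs hs2 h₁ hp₁)
    (summable_sobNormSq_of_contDiff hs hs2 h₂ hp₂)).2

end
end

section
/- Suppose C > 0 is a constant such that ‖v‖_{L⁴(𝕋)}⁴ ≤ C ‖v‖_{L²(𝕋)}³ ‖v'‖_{L²(𝕋)} for every continuously differentiable v : 𝕋 → ℂ with ∫_𝕋 v dy = 0. Then for every u ∈ H¹(ℝ²×𝕋), setting w := u − m(u) with m(u)(x,y) := (2π)^{-1} ∫_𝕋 u(x, y') dy', one has ‖w‖_{L⁴(ℝ²×𝕋)}⁴ ≤ C · ‖w‖_{L⁶ₓL²ᵧ}³ · ‖∂ᵧu‖_{L²(ℝ²×𝕋)}, where ‖w‖_{L⁶ₓL²ᵧ} := ( ∫_{ℝ²} ( ∫_𝕋 |w(x,y)|² dy )³ dx )^{1/6}. -/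
open MeasureTheory Real
open scoped ENNReal

noncomputable section

/-- The measure on `ℝ² × 𝕋`: the product of Lebesgue measure on `ℝ²` with Lebesgue
measure on a period interval `(0, 2π]` (realising `𝕋 = ℝ/(2πℤ)` with total mass `2π`). -/
def μT : Measure (R2 × ℝ) :=
  (volume : Measure R2).prod ((volume : Measure ℝ).restrict (Set.Ioc 0 (2 * π)))

/-- The pointwise norm of the gradient in the `ℝ²`-variable, `‖∇ₓu(x,y)‖`. -/
def gradxNorm (u : R2 × ℝ → ℂ) (p : R2 × ℝ) : ℝ :=
  ‖fderiv ℝ (fun x : R2 => u (x, p.2)) p.1‖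

/-- The derivative in the `𝕋`-variable, `∂ᵧu(x,y)`. -/
def dyDeriv (u : R2 × ℝ → ℂ) (p : R2 × ℝ) : ℂ :=
  deriv (fun y : ℝ => u (p.1, y)) p.2

/-- `u ∈ H¹(ℝ²×𝕋)`: `u` is differentiable, `2π`-periodic in the second variable, and
`u, ∇ₓu, ∂ᵧu ∈ L²(ℝ²×𝕋)`. -/
def IsH1T (u : R2 × ℝ → ℂ) : Prop :=
  Differentiable ℝ u ∧ (∀ (x : R2) (y : ℝ), u (x, y + 2 * π) = u (x, y)) ∧
    MemLp u 2 μT ∧ MemLp (gradxNorm u) 2 μT ∧ MemLp (dyDeriv u) 2 μT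

/-- The mean in the `𝕋`-variable, `m(u)(x,y) = (2π)⁻¹ ∫_𝕋 u(x,y') dy'`. -/
def ymean (u : R2 × ℝ → ℂ) (p : R2 × ℝ) : ℂ :=
  (2 * π : ℝ)⁻¹ • ∫ y in (0 : ℝ)..(2 * π), u (p.1, y)

/-- The mixed norm `‖w‖_{L⁶ₓL²ᵧ} = (∫_{ℝ²} (∫_𝕋 |w(x,y)|² dy)³ dx)^{1/6}`. -/
def mixedL6L2 (w : R2 × ℝ → ℂ) : ℝ≥0∞ :=
  (∫⁻ x, (∫⁻ y in Set.Ioc 0 (2 * π), (‖w (x, y)‖₊ : ℝ≥0∞) ^ (2 : ℕ)) ^ (3 : ℕ)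
      ∂(volume : Measure R2)) ^ ((1 : ℝ) / 6)

/-!
The hypothesis concerns `C¹` functions, whereas the derivative of a fiber `v = w(x, ·)` need not
be continuous. If `v' ∈ L²`, the Steklov average `h⁻¹ ∫₀ʰ v(y + s) ds` is `C¹`, keeps the mean,
commutes with the derivative and, as an average of translates, does not increase `L²` norms.
Applying the inequality to it and letting `h → 0⁺`, Fatou's lemma transfers the inequality to `v`.
If `‖v'‖_{L²} = ∞`, then the right-hand side is infinite unless `v = 0`. Integrating in `x` and
applying Cauchy–Schwarz to `‖w(x, ·)‖_{L²}³ ‖∂ᵧw(x, ·)‖_{L²}` gives the estimate, as `∂ᵧw = ∂ᵧu`.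
-/

open Filter Topology

section Translation

variable {E : Type*} [NormedAddCommGroup E] [NormedSpace ℝ E] {T : ℝ}

theorem enorm_integral_rpow_le_lintegral {α : Type*} [MeasurableSpace α] {ν : Measure α}
    [IsProbabilityMeasure ν] {f : α → E} (hf : AEStronglyMeasurable f ν) {p : ℝ} (hp : 1 ≤ p) :
    ‖∫ a, f a ∂ν‖ₑ ^ p ≤ ∫⁻ a, ‖f a‖ₑ ^ p ∂ν := by
  have hp0 : 0 < p := by positivity
  calc ‖∫ a, f a ∂ν‖ₑ ^ p
      ≤ eLpNorm' f 1 ν ^ p := by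
        gcongr
        simpa [eLpNorm'_eq_lintegral_enorm] using enorm_integral_le_lintegral_enorm f
    _ ≤ eLpNorm' f p ν ^ p := by
        gcongr
        exact eLpNorm'_le_eLpNorm'_of_exponent_le one_pos hp ν hf
    _ = ∫⁻ a, ‖f a‖ₑ ^ p ∂ν := (lintegral_rpow_enorm_eq_rpow_eLpNorm' hp0).symm

theorem periodic_deriv {f : ℝ → E} (hf : Function.Periodic f T) :
    Function.Periodic (deriv f) T := fun y => by
  rw [← deriv_comp_add_const, funext hf]

/-- Lebesgue measure on the period interval `(0, T]`, modelling the circle `ℝ / Tℤ`. -/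
abbrev periodMeasure (T : ℝ) : Measure ℝ := volume.restrict (Set.Ioc 0 T)

theorem lintegral_periodMeasure_comp_add (hT : 0 < T) {g : ℝ → ℝ≥0∞}
    (hg : Function.Periodic g T) (s : ℝ) :
    ∫⁻ y, g (y + s) ∂periodMeasure T = ∫⁻ y, g y ∂periodMeasure T := by
  have preimage_Ioc : (· + s) ⁻¹' Set.Ioc s (s + T) = Set.Ioc 0 T := by
    rw [Set.preimage_add_const_Ioc, sub_self, add_sub_cancel_left]
  calc ∫⁻ y, g (y + s) ∂periodMeasure T
      = ∫⁻ y in Set.Ioc s (s + T), g y := by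
        rw [periodMeasure, ← preimage_Ioc]
        exact (measurePreserving_add_right volume s).setLIntegral_comp_preimage_emb
          (measurableEmbedding_addRight s) g _
    _ = ∫⁻ y in Set.Ioc 0 (0 + T), g y :=
        (isAddFundamentalDomain_Ioc hT s).setLIntegral_eq (isAddFundamentalDomain_Ioc hT 0) g
          hg.map_vadd_zmultiples
    _ = ∫⁻ y, g y ∂periodMeasure T := by rw [zero_add]

theorem eLpNorm_integral_comp_add_le (hT : 0 < T) {f : ℝ → E} (hfm : StronglyMeasurable f)
    (hf : Function.Periodic f T) (ν : Measure ℝ) [IsProbabilityMeasure ν] {p : ℝ≥0∞}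
    (hp : 1 ≤ p) (hp_top : p ≠ ∞) :
    eLpNorm (fun y => ∫ s, f (y + s) ∂ν) p (periodMeasure T) ≤
      eLpNorm f p (periodMeasure T) := by
  have hp0 : p ≠ 0 := (one_pos.trans_le hp).ne'
  have one_le_toReal : 1 ≤ p.toReal := by simpa using ENNReal.toReal_mono hp_top hp
  have translate_meas (y : ℝ) : AEStronglyMeasurable (fun s => f (y + s)) ν :=
    (hfm.comp_measurable (measurable_const_add y)).aestronglyMeasurable
  have enorm_meas : Measurable fun y => ‖f y‖ₑ := hfm.enorm
  rw [eLpNorm_eq_lintegral_rpow_enorm_toReal hp0 hp_top,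
    eLpNorm_eq_lintegral_rpow_enorm_toReal hp0 hp_top]
  gcongr ?_ ^ _
  calc ∫⁻ y, ‖∫ s, f (y + s) ∂ν‖ₑ ^ p.toReal ∂periodMeasure T
      ≤ ∫⁻ y, ∫⁻ s, ‖f (y + s)‖ₑ ^ p.toReal ∂ν ∂periodMeasure T :=
        lintegral_mono fun y => enorm_integral_rpow_le_lintegral (translate_meas y) one_le_toReal
    _ = ∫⁻ s, ∫⁻ y, ‖f (y + s)‖ₑ ^ p.toReal ∂periodMeasure T ∂ν :=
        lintegral_lintegral_swap <| Measurable.aemeasurable <|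
          (enorm_meas.comp (measurable_fst.add measurable_snd)).pow_const p.toReal
    _ = ∫⁻ _, ∫⁻ y, ‖f y‖ₑ ^ p.toReal ∂periodMeasure T ∂ν :=
        lintegral_congr <| lintegral_periodMeasure_comp_add hT (hf.comp fun z => ‖z‖ₑ ^ p.toReal)
    _ = ∫⁻ y, ‖f y‖ₑ ^ p.toReal ∂periodMeasure T := by simp

end Translation

section Steklov

variable {E : Type*} [NormedAddCommGroup E] [NormedSpace ℝ E] {f : ℝ → E} {h T : ℝ}

/-- The Steklov average of `f` at scale `h`, a regularization which gains one derivative and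
commutes with differentiation. -/
def steklovAverage (h : ℝ) (f : ℝ → E) (y : ℝ) : E := ⨍ s in (0)..h, f (y + s)

theorem steklovAverage_eq_integral_comp_add (h : ℝ) (f : ℝ → E) (y : ℝ) :
    steklovAverage h f y = h⁻¹ • ∫ s in (0)..h, f (y + s) := by
  rw [steklovAverage, interval_average_eq, sub_zero]

theorem steklovAverage_eq_integral (h : ℝ) (f : ℝ → E) (y : ℝ) :
    steklovAverage h f y = h⁻¹ • ∫ s in y..(y + h), f s := by
  rw [steklovAverage_eq_integral_comp_add, intervalIntegral.integral_comp_add_left, add_zero]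

theorem periodic_steklovAverage (hf : Function.Periodic f T) (h : ℝ) :
    Function.Periodic (steklovAverage h f) T := fun y => by
  simp only [steklovAverage, add_right_comm y T, hf _]

theorem eLpNorm_steklovAverage_le (hT : 0 < T) (hfm : StronglyMeasurable f)
    (hf : Function.Periodic f T) (hh : 0 < h) {p : ℝ≥0∞} (hp : 1 ≤ p) (hp_top : p ≠ ∞) :
    eLpNorm (steklovAverage h f) p (periodMeasure T) ≤ eLpNorm f p (periodMeasure T) := by
  have : NeZero (volume.restrict (Set.uIoc 0 h)) := ⟨by simp [hh.ne']⟩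
  have : IsFiniteMeasure (volume.restrict (Set.uIoc 0 h)) := ⟨by simp [Set.uIoc]⟩
  exact eLpNorm_integral_comp_add_le hT hfm hf _ hp hp_top

variable [CompleteSpace E]

theorem hasDerivAt_steklovAverage (hf : Continuous f) (h y : ℝ) :
    HasDerivAt (steklovAverage h f) (h⁻¹ • (f (y + h) - f y)) y := by
  have hasDerivAt_primitive (z : ℝ) : HasDerivAt (fun z => ∫ s in (0)..z, f s) (f z) z :=
    (hf.integral_hasStrictDerivAt 0 z).hasDerivAt
  have eq_sub : steklovAverage h f =
      fun z => h⁻¹ • ((∫ s in (0)..(z + h), f s) - ∫ s in (0)..z, f s) := funext fun z => by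
    rw [steklovAverage_eq_integral, intervalIntegral.integral_interval_sub_left
      (hf.intervalIntegrable _ _) (hf.intervalIntegrable _ _)]
  rw [eq_sub]
  exact (((hasDerivAt_primitive (y + h)).comp_add_const y h).sub
    (hasDerivAt_primitive y)).const_smul h⁻¹

theorem contDiff_one_steklovAverage (hf : Continuous f) (h : ℝ) :
    ContDiff ℝ 1 (steklovAverage h f) := by
  refine contDiff_one_iff_deriv.2
    ⟨fun y => (hasDerivAt_steklovAverage hf h y).differentiableAt, ?_⟩
  rw [funext fun y => (hasDerivAt_steklovAverage hf h y).deriv]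
  fun_prop

theorem deriv_steklovAverage (hf : Differentiable ℝ f)
    (hf' : ∀ a b, IntervalIntegrable (deriv f) volume a b) (h : ℝ) :
    deriv (steklovAverage h f) = steklovAverage h (deriv f) := funext fun y => by
  rw [(hasDerivAt_steklovAverage hf.continuous h y).deriv, steklovAverage_eq_integral,
    intervalIntegral.integral_deriv_eq_sub (fun z _ => hf z) (hf' _ _)]

theorem integral_steklovAverage (hfc : Continuous f) (hf : Function.Periodic f T) (hh : h ≠ 0) :
    ∫ y in (0)..T, steklovAverage h f y = ∫ y in (0)..T, f y := by
  have integral_translate (s : ℝ) : ∫ y in (0)..T, f (y + s) = ∫ y in (0)..T, f y := by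
    rw [intervalIntegral.integral_comp_add_right, zero_add, add_comm T,
      hf.intervalIntegral_add_eq s 0, zero_add]
  have integrable_uncurry :
      IntegrableOn (Function.uncurry fun y s => f (y + s)) (Set.uIoc 0 T ×ˢ Set.uIoc 0 h) :=
    ((Continuous.continuousOn (by unfold Function.uncurry; fun_prop)).integrableOn_compact
      (isCompact_uIcc.prod isCompact_uIcc)).mono_set
        (Set.prod_mono Set.uIoc_subset_uIcc Set.uIoc_subset_uIcc)
  simp only [steklovAverage_eq_integral_comp_add]
  rw [intervalIntegral.integral_smul, intervalIntegral_intervalIntegral_swap integrable_uncurry]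
  simp only [integral_translate, intervalIntegral.integral_const, sub_zero, inv_smul_smul₀ hh]

theorem tendsto_steklovAverage (hf : Continuous f) (y : ℝ) :
    Tendsto (fun h => steklovAverage h f y) (𝓝[>] 0) (𝓝 (f y)) := by
  have slope_tendsto := (hf.integral_hasStrictDerivAt y y).hasDerivAt.tendsto_slope_zero_right
  simpa only [steklovAverage_eq_integral, intervalIntegral.integral_same, sub_zero]
    using slope_tendsto

end Steklov

section GagliardoNirenberg

theorem sq_rpow_one_half (a : ℝ≥0∞) : (a ^ 2) ^ ((1 : ℝ) / 2) = a := by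
  rw [← ENNReal.rpow_natCast_mul]
  norm_num

theorem sq_rpow_three_halves (a : ℝ≥0∞) : (a ^ 2) ^ ((3 : ℝ) / 2) = a ^ 3 := by
  rw [← ENNReal.rpow_natCast_mul]
  norm_num

theorem eLpNorm_natCast_pow {α E : Type*} [MeasurableSpace α] [NormedAddCommGroup E]
    (f : α → E) {n : ℕ} (hn : n ≠ 0) (μ : Measure α) :
    eLpNorm f n μ ^ n = ∫⁻ a, ‖f a‖ₑ ^ n ∂μ := by
  simpa using
    eLpNorm_nnreal_pow_eq_lintegral (f := f) (μ := μ) (Nat.cast_ne_zero (R := NNReal).2 hn)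

theorem ofReal_intervalIntegral_norm_pow {E : Type*} [NormedAddCommGroup E] {f : ℝ → E}
    (hf : Continuous f) {T : ℝ} (hT : 0 ≤ T) {n : ℕ} (hn : n ≠ 0) :
    ENNReal.ofReal (∫ y in (0)..T, ‖f y‖ ^ n) = eLpNorm f n (periodMeasure T) ^ n := by
  have integrable_pow : Integrable (fun y => ‖f y‖ ^ n) (periodMeasure T) :=
    ((hf.norm.pow n).intervalIntegrable 0 T).1
  rw [intervalIntegral.integral_of_le hT, eLpNorm_natCast_pow f hn,
    ofReal_integral_eq_lintegral_ofReal integrable_pow (ae_of_all _ fun y => by positivity)]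
  simp only [ENNReal.ofReal_pow (norm_nonneg _), ofReal_norm]

/-- The mean-zero Gagliardo–Nirenberg inequality
`‖v‖_{L⁴}⁴ ≤ C ‖v‖_{L²}³ ‖v'‖_{L²}` for `E`-valued `C¹` functions on the circle of length `T`. -/
def MeanZeroGN (E : Type*) [NormedAddCommGroup E] [NormedSpace ℝ E] (T C : ℝ) : Prop :=
  ∀ v : ℝ → E, ContDiff ℝ 1 v → Function.Periodic v T → (∫ y in (0)..T, v y) = 0 →
    (∫ y in (0)..T, ‖v y‖ ^ 4) ≤
      C * (∫ y in (0)..T, ‖v y‖ ^ 2) ^ ((3 : ℝ) / 2) *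
        (∫ y in (0)..T, ‖deriv v y‖ ^ 2) ^ ((1 : ℝ) / 2)

namespace MeanZeroGN

variable {E : Type*} [NormedAddCommGroup E] [NormedSpace ℝ E] {C T : ℝ} {v : ℝ → E}

theorem eLpNorm_pow_le_of_contDiff (hGN : MeanZeroGN E T C) (hC : 0 ≤ C) (hT : 0 ≤ T)
    (hv : ContDiff ℝ 1 v) (hper : Function.Periodic v T) (hmean : ∫ y in (0)..T, v y = 0) :
    eLpNorm v 4 (periodMeasure T) ^ 4 ≤
      ENNReal.ofReal C * eLpNorm v 2 (periodMeasure T) ^ 3 *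
        eLpNorm (deriv v) 2 (periodMeasure T) := by
  have integral_sq_nonneg (f : ℝ → E) : 0 ≤ ∫ y in (0)..T, ‖f y‖ ^ 2 :=
    intervalIntegral.integral_nonneg hT fun y _ => by positivity
  have ofReal_ineq := ENNReal.ofReal_le_ofReal (hGN v hv hper hmean)
  rw [ENNReal.ofReal_mul (mul_nonneg hC (rpow_nonneg (integral_sq_nonneg v) _)),
    ENNReal.ofReal_mul hC,
    ← ENNReal.ofReal_rpow_of_nonneg (integral_sq_nonneg _) (by norm_num),
    ← ENNReal.ofReal_rpow_of_nonneg (integral_sq_nonneg _) (by norm_num),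
    ofReal_intervalIntegral_norm_pow hv.continuous hT four_ne_zero,
    ofReal_intervalIntegral_norm_pow hv.continuous hT two_ne_zero,
    ofReal_intervalIntegral_norm_pow (hv.continuous_deriv le_rfl) hT two_ne_zero,
    sq_rpow_three_halves, sq_rpow_one_half] at ofReal_ineq
  exact mod_cast ofReal_ineq

variable [CompleteSpace E]

theorem eLpNorm_pow_le_of_memLp (hGN : MeanZeroGN E T C) (hC : 0 ≤ C) (hT : 0 < T)
    (hv : Differentiable ℝ v) (hper : Function.Periodic v T) (hmean : ∫ y in (0)..T, v y = 0)
    (hv' : MemLp (deriv v) 2 (periodMeasure T)) :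
    eLpNorm v 4 (periodMeasure T) ^ 4 ≤
      ENNReal.ofReal C * eLpNorm v 2 (periodMeasure T) ^ 3 *
        eLpNorm (deriv v) 2 (periodMeasure T) := by
  have deriv_integrable : ∀ a b, IntervalIntegrable (deriv v) volume a b :=
    (periodic_deriv hper).intervalIntegrable₀ hT.ne' <|
      (intervalIntegrable_iff_integrableOn_Ioc_of_le hT.le).2 (hv'.integrable one_le_two)
  have avg_bound : ∀ h > 0, eLpNorm (steklovAverage h v) 4 (periodMeasure T) ^ 4 ≤
      ENNReal.ofReal C * eLpNorm v 2 (periodMeasure T) ^ 3 *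
        eLpNorm (deriv v) 2 (periodMeasure T) := fun h hh => by
    refine (hGN.eLpNorm_pow_le_of_contDiff hC hT.le (contDiff_one_steklovAverage hv.continuous h)
      (periodic_steklovAverage hper h) ?_).trans ?_
    · rw [integral_steklovAverage hv.continuous hper hh.ne', hmean]
    · rw [deriv_steklovAverage hv deriv_integrable]
      gcongr
      · exact eLpNorm_steklovAverage_le hT hv.continuous.stronglyMeasurable hper hh one_le_two
          ENNReal.ofNat_ne_top
      · exact eLpNorm_steklovAverage_le hT (stronglyMeasurable_deriv v) (periodic_deriv hper) hh
          one_le_two ENNReal.ofNat_ne_top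
  have pow_four_le_iff (a b : ℝ≥0∞) : a ^ 4 ≤ b ↔ a ≤ b ^ (4 : ℝ)⁻¹ := by
    rw [ENNReal.le_rpow_inv_iff four_pos, ENNReal.rpow_ofNat]
  rw [pow_four_le_iff]
  refine Lp.eLpNorm_le_of_ae_tendsto (u := 𝓝[>] 0) (f := fun h => steklovAverage h v) ?_
    (fun h => (contDiff_one_steklovAverage hv.continuous h).continuous.aestronglyMeasurable)
    (ae_of_all _ (tendsto_steklovAverage hv.continuous))
  filter_upwards [self_mem_nhdsWithin] with h hh using (pow_four_le_iff _ _).1 (avg_bound h hh)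

theorem eLpNorm_pow_le (hGN : MeanZeroGN E T C) (hC : 0 < C) (hT : 0 < T)
    (hv : Differentiable ℝ v) (hper : Function.Periodic v T) (hmean : ∫ y in (0)..T, v y = 0) :
    eLpNorm v 4 (periodMeasure T) ^ 4 ≤
      ENNReal.ofReal C * eLpNorm v 2 (periodMeasure T) ^ 3 *
        eLpNorm (deriv v) 2 (periodMeasure T) := by
  by_cases deriv_top : eLpNorm (deriv v) 2 (periodMeasure T) = ∞
  · by_cases v_zero : eLpNorm v 2 (periodMeasure T) = 0
    · have v_ae_zero : v =ᵐ[periodMeasure T] 0 :=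
        (eLpNorm_eq_zero_iff hv.continuous.aestronglyMeasurable two_ne_zero).1 v_zero
      simp [eLpNorm_congr_ae v_ae_zero]
    · rw [deriv_top, ENNReal.mul_top (mul_ne_zero (by simpa using hC) (pow_ne_zero 3 v_zero))]
      exact le_top
  · exact hGN.eLpNorm_pow_le_of_memLp hC.le hT hv hper hmean
      ⟨aestronglyMeasurable_deriv v _, lt_top_iff_ne_top.2 deriv_top⟩

end MeanZeroGN

end GagliardoNirenberg

section Fiber

variable {X E : Type*} [NormedAddCommGroup E] [NormedSpace ℝ E] {u : X × ℝ → E} {T : ℝ}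

/-- The partial derivative `∂ᵧu` in the second variable. -/
def fiberDeriv (u : X × ℝ → E) (p : X × ℝ) : E := deriv (fun y => u (p.1, y)) p.2

/-- The mean `m(u)(x) = T⁻¹ ∫₀ᵀ u(x, y) dy` over the fiber, as a function of the first variable
only. -/
def fiberMean (T : ℝ) (u : X × ℝ → E) (x : X) : E := T⁻¹ • ∫ y in (0)..T, u (x, y)

theorem fiberDeriv_sub_fiberMean (T : ℝ) (u : X × ℝ → E) :
    fiberDeriv (fun p => u p - fiberMean T u p.1) = fiberDeriv u :=
  funext fun p => deriv_sub_const (fiberMean T u p.1)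

theorem integral_sub_fiberMean [CompleteSpace E] (hT : T ≠ 0) {x : X}
    (hu : Continuous fun y => u (x, y)) :
    ∫ y in (0)..T, (u (x, y) - fiberMean T u x) = 0 := by
  rw [intervalIntegral.integral_sub (hu.intervalIntegrable _ _) intervalIntegrable_const,
    intervalIntegral.integral_const, sub_zero, fiberMean, smul_inv_smul₀ hT, sub_self]

end Fiber

section Product

variable {X E : Type*} [MeasurableSpace X] [NormedAddCommGroup E]

theorem eLpNorm_prod_natCast_pow {Y : Type*} [MeasurableSpace Y] {μ : Measure X} {ν : Measure Y}
    [SFinite ν] {f : X × Y → E} (hf : AEStronglyMeasurable f (μ.prod ν)) {n : ℕ} (hn : n ≠ 0) :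
    eLpNorm f n (μ.prod ν) ^ n = ∫⁻ x, eLpNorm (fun y => f (x, y)) n ν ^ n ∂μ := by
  simp only [eLpNorm_natCast_pow _ hn]
  exact lintegral_prod _ (hf.enorm.pow_const n)

theorem measurable_eLpNorm_prodMk {Y : Type*} [MeasurableSpace Y] {ν : Measure Y} [SFinite ν]
    {f : X × Y → E} (hf : StronglyMeasurable f) {p : ℝ≥0∞} (hp : p ≠ ∞) :
    Measurable fun x => eLpNorm (fun y => f (x, y)) p ν := by
  rcases eq_or_ne p 0 with rfl | hp0
  · simp
  · simp only [eLpNorm_eq_lintegral_rpow_enorm_toReal hp0 hp]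
    exact (hf.enorm.pow_const p.toReal).lintegral_prod_right'.pow_const _

/-- The mixed norm `‖w‖_{L⁶ₓL²ᵧ}` on the product of `(X, μ)` with the circle of length `T`. -/
def mixedL6L2Norm (μ : Measure X) (T : ℝ) (w : X × ℝ → E) : ℝ≥0∞ :=
  (∫⁻ x, (∫⁻ y, ‖w (x, y)‖ₑ ^ 2 ∂periodMeasure T) ^ 3 ∂μ) ^ ((1 : ℝ) / 6)

theorem mixedL6L2Norm_pow_three (μ : Measure X) (T : ℝ) (w : X × ℝ → E) :
    mixedL6L2Norm μ T w ^ 3 =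
      (∫⁻ x, (eLpNorm (fun y => w (x, y)) 2 (periodMeasure T) ^ 3) ^ 2 ∂μ) ^ ((1 : ℝ) / 2) := by
  have sq_eq (x : X) : ∫⁻ y, ‖w (x, y)‖ₑ ^ 2 ∂periodMeasure T =
      eLpNorm (fun y => w (x, y)) 2 (periodMeasure T) ^ 2 :=
    (eLpNorm_natCast_pow _ two_ne_zero _).symm
  rw [mixedL6L2Norm, ← ENNReal.rpow_mul_natCast]
  simp only [sq_eq, pow_right_comm _ 2 3]
  norm_num

variable [NormedSpace ℝ E] {u w : X × ℝ → E} {T : ℝ}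

theorem stronglyMeasurable_fiberDeriv (hu : StronglyMeasurable u)
    (hdiff : ∀ x, Differentiable ℝ fun y => u (x, y)) : StronglyMeasurable (fiberDeriv u) := by
  refine stronglyMeasurable_of_tendsto (𝓝[>] (0 : ℝ))
    (f := fun t p => t⁻¹ • (u (p.1, p.2 + t) - u p)) (fun t => ?_) (tendsto_pi_nhds.2 fun p => ?_)
  · exact ((hu.comp_measurable (by fun_prop)).sub hu).const_smul t⁻¹
  · exact (hdiff p.1 p.2).hasDerivAt.tendsto_slope_zero_right

theorem stronglyMeasurable_fiberMean (hu : StronglyMeasurable u) (hT : 0 ≤ T) :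
    StronglyMeasurable (fiberMean T u) := by
  have integral_meas : StronglyMeasurable fun x => ∫ y, u (x, y) ∂periodMeasure T :=
    hu.integral_prod_right'
  unfold fiberMean
  simpa only [intervalIntegral.integral_of_le hT] using integral_meas.fun_const_smul T⁻¹

variable [CompleteSpace E] {μ : Measure X} {C : ℝ}

theorem MeanZeroGN.eLpNorm_prod_pow_le (hGN : MeanZeroGN E T C) (hC : 0 < C) (hT : 0 < T)
    (hw : StronglyMeasurable w) (hdiff : ∀ x, Differentiable ℝ fun y => w (x, y))
    (hper : ∀ x, Function.Periodic (fun y => w (x, y)) T)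
    (hmean : ∀ x, ∫ y in (0)..T, w (x, y) = 0) :
    eLpNorm w 4 (μ.prod (periodMeasure T)) ^ 4 ≤
      ENNReal.ofReal C * mixedL6L2Norm μ T w ^ 3 *
        eLpNorm (fiberDeriv w) 2 (μ.prod (periodMeasure T)) := by
  have deriv_meas := stronglyMeasurable_fiberDeriv hw hdiff
  let a (x : X) : ℝ≥0∞ := eLpNorm (fun y => w (x, y)) 2 (periodMeasure T)
  let b (x : X) : ℝ≥0∞ := eLpNorm (fun y => fiberDeriv w (x, y)) 2 (periodMeasure T)
  have a_meas : Measurable a := measurable_eLpNorm_prodMk hw ENNReal.ofNat_ne_top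
  have b_meas : Measurable b := measurable_eLpNorm_prodMk deriv_meas ENNReal.ofNat_ne_top
  have deriv_norm : eLpNorm (fiberDeriv w) 2 (μ.prod (periodMeasure T)) =
      (∫⁻ x, b x ^ 2 ∂μ) ^ ((1 : ℝ) / 2) := by
    have sq_eq : eLpNorm (fiberDeriv w) 2 (μ.prod (periodMeasure T)) ^ 2 = ∫⁻ x, b x ^ 2 ∂μ :=
      eLpNorm_prod_natCast_pow deriv_meas.aestronglyMeasurable two_ne_zero
    rw [← sq_eq, sq_rpow_one_half]
  have cauchy_schwarz : ∫⁻ x, a x ^ 3 * b x ∂μ ≤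
      (∫⁻ x, (a x ^ 3) ^ 2 ∂μ) ^ ((1 : ℝ) / 2) * (∫⁻ x, b x ^ 2 ∂μ) ^ ((1 : ℝ) / 2) := by
    simpa only [Pi.mul_apply, ENNReal.rpow_ofNat] using ENNReal.lintegral_mul_le_Lp_mul_Lq μ
      Real.HolderConjugate.two_two (a_meas.pow_const 3).aemeasurable b_meas.aemeasurable
  calc eLpNorm w 4 (μ.prod (periodMeasure T)) ^ 4
      = ∫⁻ x, eLpNorm (fun y => w (x, y)) 4 (periodMeasure T) ^ 4 ∂μ :=
        eLpNorm_prod_natCast_pow hw.aestronglyMeasurable four_ne_zero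
    _ ≤ ∫⁻ x, ENNReal.ofReal C * (a x ^ 3 * b x) ∂μ := lintegral_mono fun x => by
        rw [← mul_assoc]
        exact hGN.eLpNorm_pow_le hC hT (hdiff x) (hper x) (hmean x)
    _ = ENNReal.ofReal C * ∫⁻ x, a x ^ 3 * b x ∂μ :=
        lintegral_const_mul' _ _ ENNReal.ofReal_ne_top
    _ ≤ ENNReal.ofReal C * ((∫⁻ x, (a x ^ 3) ^ 2 ∂μ) ^ ((1 : ℝ) / 2) *
          (∫⁻ x, b x ^ 2 ∂μ) ^ ((1 : ℝ) / 2)) := by gcongr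
    _ = ENNReal.ofReal C * mixedL6L2Norm μ T w ^ 3 *
          eLpNorm (fiberDeriv w) 2 (μ.prod (periodMeasure T)) := by
        rw [mixedL6L2Norm_pow_three, deriv_norm, mul_assoc]

theorem mean_zero_part_estimate_general (hC : 0 < C) (hT : 0 < T) (hGN : MeanZeroGN E T C)
    (hu : StronglyMeasurable u) (hdiff : ∀ x, Differentiable ℝ fun y => u (x, y))
    (hper : ∀ x, Function.Periodic (fun y => u (x, y)) T) :
    eLpNorm (fun p => u p - fiberMean T u p.1) 4 (μ.prod (periodMeasure T)) ^ 4 ≤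
      ENNReal.ofReal C * mixedL6L2Norm μ T (fun p => u p - fiberMean T u p.1) ^ 3 *
        eLpNorm (fiberDeriv u) 2 (μ.prod (periodMeasure T)) := by
  rw [← fiberDeriv_sub_fiberMean T u]
  exact hGN.eLpNorm_prod_pow_le hC hT
    (hu.sub ((stronglyMeasurable_fiberMean hu hT.le).comp_measurable measurable_fst))
    (fun x => (hdiff x).sub_const (fiberMean T u x)) (fun x y => congrArg (· - _) (hper x y))
    (fun x => integral_sub_fiberMean hT.ne' (hdiff x).continuous)

end Product

/-- The estimate for the mean-zero part in the proof of Proposition 1.4: if `C > 0` is such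
that `‖v‖_{L⁴(𝕋)}⁴ ≤ C ‖v‖_{L²(𝕋)}³ ‖v'‖_{L²(𝕋)}` for all `C¹` mean-zero `v : 𝕋 → ℂ`, then
for every `u ∈ H¹(ℝ²×𝕋)`, with `w = u − m(u)`,
`‖w‖_{L⁴(ℝ²×𝕋)}⁴ ≤ C ‖w‖_{L⁶ₓL²ᵧ}³ ‖∂ᵧu‖_{L²(ℝ²×𝕋)}`. -/
theorem mean_zero_part_estimate (C : ℝ) (hC : 0 < C)
    (hGN : ∀ v : ℝ → ℂ, ContDiff ℝ 1 v → Function.Periodic v (2 * π) →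
      (∫ y in (0 : ℝ)..(2 * π), v y) = 0 →
      (∫ y in (0 : ℝ)..(2 * π), ‖v y‖ ^ 4) ≤
        C * (∫ y in (0 : ℝ)..(2 * π), ‖v y‖ ^ 2) ^ ((3 : ℝ) / 2) *
          (∫ y in (0 : ℝ)..(2 * π), ‖deriv v y‖ ^ 2) ^ ((1 : ℝ) / 2))
    (u : R2 × ℝ → ℂ) (hu : IsH1T u) :
    eLpNorm (fun p => u p - ymean u p) 4 μT ^ (4 : ℕ) ≤
      ENNReal.ofReal C * mixedL6L2 (fun p => u p - ymean u p) ^ (3 : ℕ) *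
        eLpNorm (dyDeriv u) 2 μT := by
  exact mean_zero_part_estimate_general hC two_pi_pos hGN hu.1.continuous.stronglyMeasurable
    (fun _ => hu.1.comp (by fun_prop)) hu.2.1

end
end

section
/- Let C_{GN,2d} := inf{ ‖u‖_{L²(ℝ²)}² ‖∇u‖_{L²(ℝ²)}² / ‖u‖_{L⁴(ℝ²)}⁴ : u ∈ H¹(ℝ²), u ≠ 0 }. There exists a constant c > 0 such that for every u ∈ H¹(ℝ²×𝕋): ‖u‖_{L⁴(ℝ²×𝕋)} ≤ ‖∇ₓu‖_{L²(ℝ²×𝕋)}^{1/2} · ( (2π C_{GN,2d})^{-1/4} ‖u‖_{L²(ℝ²×𝕋)}^{1/2} + c · ‖u‖_{L²(ℝ²×𝕋)}^{1/4} ‖∂ᵧu‖_{L²(ℝ²×𝕋)}^{1/4} ). -/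
open MeasureTheory Real
open scoped ENNReal

noncomputable section

/-!
On the interval `I = (0, 2π]`, the fundamental theorem of calculus for `|u(x, ·)|²`, averaged over
the base point and integrated in `x`, gives
`‖u(·, y)‖₂² ≤ |I|⁻¹ ‖u‖₂² + 2 ‖u‖₂ ‖∂ᵧu‖₂` for every `y ∈ I`.
Inserting this into the sharp two-dimensional inequality on each slice and integrating in `y` yields
`C_{GN,2d} ‖u‖₄⁴ ≤ ‖∇ₓu‖₂² (|I|⁻¹ ‖u‖₂² + 2 ‖u‖₂ ‖∂ᵧu‖₂)`,
and the theorem follows by taking fourth roots, since `t ↦ t^{1/4}` is subadditive. The constant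
`c` is finite because `C_{GN,2d} ≥ 1/4`: this is Ladyzhenskaya's inequality
`‖v‖₄⁴ ≤ 4 ‖v‖₂² ‖∇v‖₂²`, which follows from the same one-dimensional estimate along the coordinate
lines (now of infinite length, so that the average drops out) and the Loomis–Whitney-type bound
`lintegral_prod_lintegral_pow_le`.
-/

section LpNorms

variable {α β E F : Type*} [MeasurableSpace α] [MeasurableSpace β]
  [NormedAddCommGroup E] [NormedAddCommGroup F]

lemma eLpNorm_ofNat_pow_eq_lintegral (μ : Measure α) (f : α → E) (n : ℕ) [n.AtLeastTwo] :
    eLpNorm f ofNat(n) μ ^ (OfNat.ofNat n : ℕ) = ∫⁻ x, ‖f x‖ₑ ^ (OfNat.ofNat n : ℕ) ∂μ := by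
  simpa using eLpNorm_nnreal_pow_eq_lintegral (f := f) (μ := μ) (p := OfNat.ofNat n) (by simp)

lemma lintegral_enorm_sq_ne_top {μ : Measure α} {f : α → E} (hf : MemLp f 2 μ) :
    ∫⁻ x, ‖f x‖ₑ ^ 2 ∂μ ≠ ∞ :=
  eLpNorm_ofNat_pow_eq_lintegral μ f 2 ▸ ENNReal.pow_ne_top hf.eLpNorm_ne_top

lemma lintegral_enorm_mul_enorm_le_eLpNorm_two_mul {μ : Measure α} {f : α → E} {g : α → F}
    (hf : AEStronglyMeasurable f μ) (hg : AEStronglyMeasurable g μ) :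
    ∫⁻ x, ‖f x‖ₑ * ‖g x‖ₑ ∂μ ≤ eLpNorm f 2 μ * eLpNorm g 2 μ := by
  simpa [eLpNorm_eq_lintegral_rpow_enorm_toReal] using
    ENNReal.lintegral_mul_le_Lp_mul_Lq μ Real.HolderConjugate.two_two hf.enorm hg.enorm

lemma ae_memLp_prodMk_right {μ : Measure α} {ν : Measure β} [SFinite μ] [SFinite ν] {p : ℝ≥0∞}
    (hp₀ : p ≠ 0) (hp : p ≠ ∞) {f : α × β → E} (hf : MemLp f p (μ.prod ν)) :
    ∀ᵐ y ∂ν, MemLp (fun x ↦ f (x, y)) p μ := by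
  filter_upwards [hf.1.prod_swap.prodMk_left,
    ((integrable_norm_rpow_iff hf.1 hp₀ hp).2 hf).prod_left_ae] with y hmeas hint
  exact (integrable_norm_rpow_iff hmeas hp₀ hp).1 hint

end LpNorms

section FundamentalTheorem

variable {E : Type*} [NormedAddCommGroup E] [InnerProductSpace ℝ E] {f f' : ℝ → E} {I : Set ℝ}

lemma enorm_deriv_norm_sq_le {t : ℝ} {e : E} (hf : HasDerivAt f e t) :
    ‖deriv (fun s ↦ ‖f s‖ ^ 2) t‖ₑ ≤ 2 * (‖f t‖ₑ * ‖e‖ₑ) := by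
  have hnorm : ‖deriv (fun s ↦ ‖f s‖ ^ 2) t‖ ≤ 2 * (‖f t‖ * ‖e‖) := by
    rw [hf.norm_sq.deriv, norm_mul, Real.norm_ofNat]
    gcongr
    exact norm_inner_le_norm _ _
  simpa only [ofReal_norm, ENNReal.ofReal_mul, zero_le_two, norm_nonneg, ENNReal.ofReal_ofNat]
    using ENNReal.ofReal_le_ofReal hnorm

lemma enorm_sq_le_enorm_sq_add_lintegral (hI : I.OrdConnected)
    (hf : ∀ t ∈ I, HasDerivAt f (f' t) t) {a b : ℝ} (ha : a ∈ I) (hb : b ∈ I) :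
    ‖f b‖ₑ ^ 2 ≤ ‖f a‖ₑ ^ 2 + 2 * ∫⁻ t in I, ‖f t‖ₑ * ‖f' t‖ₑ := by
  set g : ℝ → ℝ := deriv fun t ↦ ‖f t‖ ^ 2
  have hg_le : ∫⁻ t in I, ‖g t‖ₑ ≤ 2 * ∫⁻ t in I, ‖f t‖ₑ * ‖f' t‖ₑ := by
    rw [← lintegral_const_mul' _ _ ENNReal.ofNat_ne_top]
    exact setLIntegral_mono' hI.measurableSet fun t ht ↦ enorm_deriv_norm_sq_le (hf t ht)
  refine le_trans ?_ (add_le_add_right hg_le _)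
  rcases eq_or_ne (∫⁻ t in I, ‖g t‖ₑ) ∞ with htop | hfin
  · simp [htop]
  have hsub : Set.uIcc a b ⊆ I := hI.uIcc_subset ha hb
  have hg_int : IntegrableOn g I := ⟨(measurable_deriv _).aestronglyMeasurable, hfin.lt_top⟩
  have hftc : ∫ t in a..b, g t = ‖f b‖ ^ 2 - ‖f a‖ ^ 2 :=
    intervalIntegral.integral_eq_sub_of_hasDerivAt
      (fun t ht ↦ (hf t (hsub ht)).norm_sq.differentiableAt.hasDerivAt)
      (hg_int.mono_set hsub).intervalIntegrable
  calc ‖f b‖ₑ ^ 2 = ‖‖f a‖ ^ 2 + ∫ t in a..b, g t‖ₑ := by simp [hftc]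
    _ ≤ ‖f a‖ₑ ^ 2 + ‖∫ t in a..b, g t‖ₑ := (enorm_add_le _ _).trans_eq (by simp)
    _ ≤ ‖f a‖ₑ ^ 2 + ∫⁻ t in Set.uIoc a b, ‖g t‖ₑ := by
      rw [← ofReal_norm (∫ t in a..b, g t), intervalIntegral.norm_integral_eq_norm_integral_uIoc,
        ofReal_norm]
      gcongr
      exact enorm_integral_le_lintegral_enorm _
    _ ≤ ‖f a‖ₑ ^ 2 + ∫⁻ t in I, ‖g t‖ₑ := by
      gcongr
      exact Set.uIoc_subset_uIcc.trans hsub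

-- For `I` of infinite length the first summand vanishes.
lemma enorm_sq_le_lintegral_div_volume_add (hI : I.OrdConnected) (hI₀ : volume I ≠ 0)
    (hf : ∀ t ∈ I, HasDerivAt f (f' t) t) (hf₂ : ∫⁻ t in I, ‖f t‖ₑ ^ 2 ≠ ∞)
    {b : ℝ} (hb : b ∈ I) :
    ‖f b‖ₑ ^ 2 ≤ (∫⁻ t in I, ‖f t‖ₑ ^ 2) / volume I + 2 * ∫⁻ t in I, ‖f t‖ₑ * ‖f' t‖ₑ := by
  rw [← tsub_le_iff_right, ENNReal.le_div_iff_mul_le (.inl hI₀) (.inr hf₂), ← setLIntegral_const]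
  exact setLIntegral_mono' hI.measurableSet fun a ha ↦
    tsub_le_iff_right.2 (enorm_sq_le_enorm_sq_add_lintegral hI hf ha hb)

end FundamentalTheorem

section Slices

variable {X E : Type*} [MeasurableSpace X] [NormedAddCommGroup E] [InnerProductSpace ℝ E]

lemma lintegral_enorm_sq_slice_le {ν : Measure X} [SFinite ν] {I : Set ℝ} (hI : I.OrdConnected)
    (hI₀ : volume I ≠ 0) {u u' : X × ℝ → E}
    (hu : ∀ x, ∀ t ∈ I, HasDerivAt (fun s ↦ u (x, s)) (u' (x, t)) t)
    (hu₂ : MemLp u 2 (ν.prod (volume.restrict I)))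
    (hu' : AEStronglyMeasurable u' (ν.prod (volume.restrict I))) {y : ℝ} (hy : y ∈ I) :
    ∫⁻ x, ‖u (x, y)‖ₑ ^ 2 ∂ν ≤ eLpNorm u 2 (ν.prod (volume.restrict I)) ^ 2 / volume I +
      2 * (eLpNorm u 2 (ν.prod (volume.restrict I)) *
        eLpNorm u' 2 (ν.prod (volume.restrict I))) := by
  have hsq : AEMeasurable (fun p ↦ ‖u p‖ₑ ^ 2) (ν.prod (volume.restrict I)) :=
    hu₂.1.enorm.pow_const 2
  have hmul : AEMeasurable (fun p ↦ ‖u p‖ₑ * ‖u' p‖ₑ) (ν.prod (volume.restrict I)) :=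
    hu₂.1.enorm.mul hu'.enorm
  have hslices : ∀ᵐ x ∂ν, ∫⁻ t in I, ‖u (x, t)‖ₑ ^ 2 < ∞ := by
    refine ae_lt_top' hsq.lintegral_prod_right' ?_
    rw [← lintegral_prod _ hsq]
    exact lintegral_enorm_sq_ne_top hu₂
  calc ∫⁻ x, ‖u (x, y)‖ₑ ^ 2 ∂ν
      ≤ ∫⁻ x, ((∫⁻ t in I, ‖u (x, t)‖ₑ ^ 2) / volume I +
          2 * ∫⁻ t in I, ‖u (x, t)‖ₑ * ‖u' (x, t)‖ₑ) ∂ν :=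
        lintegral_mono_ae <| hslices.mono fun x hx ↦
          enorm_sq_le_lintegral_div_volume_add hI hI₀ (hu x) hx.ne hy
    _ = (∫⁻ p, ‖u p‖ₑ ^ 2 ∂ν.prod (volume.restrict I)) / volume I +
          2 * ∫⁻ p, ‖u p‖ₑ * ‖u' p‖ₑ ∂ν.prod (volume.restrict I) := by
      rw [lintegral_add_left' (hsq.lintegral_prod_right'.div_const _),
        lintegral_const_mul' _ _ ENNReal.ofNat_ne_top, lintegral_prod _ hsq, lintegral_prod _ hmul]
      simp only [div_eq_mul_inv, lintegral_mul_const' _ _ (ENNReal.inv_ne_top.2 hI₀)]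
    _ ≤ _ := by
      rw [eLpNorm_ofNat_pow_eq_lintegral]
      gcongr
      exact lintegral_enorm_mul_enorm_le_eLpNorm_two_mul hu₂.1 hu'

end Slices

section Sobolev

lemma ae_lintegral_update_ne_top {n : ℕ} {α : Fin (n + 1) → Type*} [∀ i, MeasurableSpace (α i)]
    (μ : ∀ i, Measure (α i)) [∀ i, SigmaFinite (μ i)] {f : (∀ i, α i) → ℝ≥0∞}
    (hf : Measurable f) (hf_fin : ∫⁻ x, f x ∂Measure.pi μ ≠ ∞) (i : Fin (n + 1)) :
    ∀ᵐ x ∂Measure.pi μ, ∫⁻ t, f (Function.update x i t) ∂μ i ≠ ∞ := by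
  have hsplit := measurePreserving_piFinSuccAbove μ i
  set e := MeasurableEquiv.piFinSuccAbove α i
  have hfe : Measurable fun z ↦ f (e.symm z) := hf.comp e.symm.measurable
  have hfe_fin :
      ∫⁻ z, ∫⁻ t, f (e.symm (t, z)) ∂μ i ∂Measure.pi (fun j ↦ μ (i.succAbove j)) ≠ ∞ := by
    rwa [← lintegral_prod_symm' _ hfe, hsplit.symm.lintegral_comp hf]
  have hslices := (Measure.quasiMeasurePreserving_snd.comp hsplit.quasiMeasurePreserving).ae
    (ae_lt_top hfe.lintegral_prod_left' hfe_fin)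
  filter_upwards [hslices] with x hx
  simpa [e, Fin.insertNthEquiv] using hx.ne

variable {n : ℕ} {E : Type*} [NormedAddCommGroup E] [InnerProductSpace ℝ E]
  {v : EuclideanSpace ℝ (Fin (n + 1)) → E}

lemma hasDerivAt_comp_toLp_update (hv : Differentiable ℝ v) (x : Fin (n + 1) → ℝ)
    (i : Fin (n + 1)) (t : ℝ) :
    HasDerivAt (fun s ↦ v (WithLp.toLp 2 (Function.update x i s)))
      (fderiv ℝ v (WithLp.toLp 2 (Function.update x i t)) (EuclideanSpace.single i 1)) t := by
  have hline : HasDerivAt (fun s ↦ WithLp.toLp 2 (Function.update x i s))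
      (EuclideanSpace.single i (1 : ℝ)) t :=
    (PiLp.continuousLinearEquiv 2 ℝ fun _ : Fin (n + 1) ↦ ℝ).symm.hasFDerivAt.comp_hasDerivAt t
      (hasDerivAt_update x i t)
  exact (hv _).hasFDerivAt.comp_hasDerivAt t hline

lemma ae_enorm_sq_le_lintegral_update (hv : Differentiable ℝ v) (hv₂ : MemLp v 2 volume) :
    ∀ᵐ x : Fin (n + 1) → ℝ, ∀ i, ‖v (WithLp.toLp 2 x)‖ₑ ^ 2 ≤
      2 * ∫⁻ t, ‖v (WithLp.toLp 2 (Function.update x i t))‖ₑ *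
        ‖fderiv ℝ v (WithLp.toLp 2 (Function.update x i t))‖ₑ := by
  have hcont : Continuous fun x : Fin (n + 1) → ℝ ↦ v (WithLp.toLp 2 x) :=
    hv.continuous.comp (PiLp.continuous_toLp 2 _)
  have hfin : ∫⁻ x : Fin (n + 1) → ℝ, ‖v (WithLp.toLp 2 x)‖ₑ ^ 2 ≠ ∞ :=
    lintegral_enorm_sq_ne_top (hv₂.comp_measurePreserving (PiLp.volume_preserving_toLp _))
  rw [ae_all_iff]
  intro i
  filter_upwards [ae_lintegral_update_ne_top _ (hcont.enorm.measurable.pow_const 2) hfin i]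
    with x hx
  have hline := enorm_sq_le_lintegral_div_volume_add Set.ordConnected_univ (by simp)
    (fun t _ ↦ hasDerivAt_comp_toLp_update hv x i t) (by simpa using hx) (Set.mem_univ (x i))
  simp only [Function.update_eq_self, Measure.restrict_univ, Real.volume_univ, ENNReal.div_top,
    zero_add] at hline
  refine hline.trans ?_
  gcongr with t
  have hsingle : ‖EuclideanSpace.single i (1 : ℝ)‖ₑ = 1 := by
    rw [← ofReal_norm, PiLp.norm_single, norm_one, ENNReal.ofReal_one]
  simpa only [hsingle, mul_one] using ContinuousLinearMap.le_opENorm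
    (fderiv ℝ v (WithLp.toLp 2 (Function.update x i t))) (EuclideanSpace.single i 1)

lemma lintegral_enorm_rpow_two_mul_le [CompleteSpace E] {p : ℝ}
    (hp : Real.HolderConjugate (n + 1) p) (hv : Differentiable ℝ v) (hv₂ : MemLp v 2 volume) :
    ∫⁻ x, ‖v x‖ₑ ^ (2 * p) ≤ (2 * ∫⁻ x, ‖v x‖ₑ * ‖fderiv ℝ v x‖ₑ) ^ p := by
  have htoLp := PiLp.volume_preserving_toLp (Fin (n + 1))
  have hv_meas : Measurable fun x ↦ ‖v x‖ₑ := hv.continuous.enorm.measurable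
  have hmul : Measurable fun x ↦ 2 * (‖v x‖ₑ * ‖fderiv ℝ v x‖ₑ) :=
    (hv_meas.mul (measurable_fderiv ℝ v).enorm).const_mul 2
  have hpow (a : ℝ≥0∞) : a ^ (2 * p) = ∏ _i : Fin (n + 1), (a ^ 2) ^ (1 / (n : ℝ)) := by
    rw [Finset.prod_const, Finset.card_univ, Fintype.card_fin, hp.conjugate_eq,
      add_sub_cancel_right]
    simp only [← ENNReal.rpow_natCast, ← ENNReal.rpow_mul]
    congr 1
    push_cast
    ring
  calc ∫⁻ x, ‖v x‖ₑ ^ (2 * p)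
      = ∫⁻ x : Fin (n + 1) → ℝ, ∏ _i : Fin (n + 1),
          (‖v (WithLp.toLp 2 x)‖ₑ ^ 2) ^ (1 / (n : ℝ)) := by
        rw [← htoLp.lintegral_comp (hv_meas.pow_const _)]
        simp only [hpow]
    _ ≤ ∫⁻ x : Fin (n + 1) → ℝ, ∏ i, (∫⁻ t, 2 * (‖v (WithLp.toLp 2 (Function.update x i t))‖ₑ *
          ‖fderiv ℝ v (WithLp.toLp 2 (Function.update x i t))‖ₑ)) ^ (1 / (n : ℝ)) := by
        refine lintegral_mono_ae ?_
        filter_upwards [ae_enorm_sq_le_lintegral_update hv hv₂] with x hx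
        gcongr with i
        rw [lintegral_const_mul' _ _ ENNReal.ofNat_ne_top]
        exact hx i
    _ ≤ (∫⁻ x : Fin (n + 1) → ℝ, 2 * (‖v (WithLp.toLp 2 x)‖ₑ *
          ‖fderiv ℝ v (WithLp.toLp 2 x)‖ₑ)) ^ p := by
        simpa [volume_pi] using lintegral_prod_lintegral_pow_le
          (fun _ : Fin (n + 1) ↦ (volume : Measure ℝ)) (by simpa using hp)
          (hmul.comp htoLp.measurable)
    _ = _ := by
      rw [htoLp.lintegral_comp hmul, lintegral_const_mul' _ _ ENNReal.ofNat_ne_top]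

end Sobolev

lemma eLpNorm_four_pow_le_four_mul {E : Type*} [NormedAddCommGroup E] [InnerProductSpace ℝ E]
    [CompleteSpace E] {v : EuclideanSpace ℝ (Fin 2) → E} (hv : Differentiable ℝ v)
    (hv₂ : MemLp v 2 volume) :
    eLpNorm v 4 volume ^ 4 ≤
      4 * (eLpNorm v 2 volume ^ 2 * eLpNorm (fun x ↦ ‖fderiv ℝ v x‖) 2 volume ^ 2) := by
  have hcauchy := lintegral_enorm_mul_enorm_le_eLpNorm_two_mul hv₂.1
    (measurable_fderiv ℝ v).norm.aestronglyMeasurable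
  simp only [enorm_norm] at hcauchy
  calc eLpNorm v 4 volume ^ 4 = ∫⁻ x, ‖v x‖ₑ ^ (2 * 2 : ℝ) := by
        rw [eLpNorm_ofNat_pow_eq_lintegral]
        norm_num
    _ ≤ (2 * ∫⁻ x, ‖v x‖ₑ * ‖fderiv ℝ v x‖ₑ) ^ (2 : ℝ) :=
        lintegral_enorm_rpow_two_mul_le (by norm_num [Real.HolderConjugate.two_two]) hv hv₂
    _ ≤ (2 * (eLpNorm v 2 volume * eLpNorm (fun x ↦ ‖fderiv ℝ v x‖) 2 volume)) ^ (2 : ℝ) := by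
        gcongr
    _ = _ := by
        rw [ENNReal.rpow_ofNat]
        ring

section SharpConstant

lemma CGN2d_mul_eLpNorm_four_pow_le {v : R2 → ℂ} (hv : IsH1 v) :
    CGN2d * eLpNorm v 4 volume ^ 4 ≤
      eLpNorm v 2 volume ^ 2 * eLpNorm (gradNorm v) 2 volume ^ 2 := by
  by_cases hv₀ : v =ᵐ[volume] 0
  · simp [eLpNorm_congr_ae hv₀]
  · exact ENNReal.mul_le_of_le_div (iInf₂_le v ⟨hv, hv₀⟩)

lemma inv_four_le_CGN2d : (4 : ℝ≥0∞)⁻¹ ≤ CGN2d := by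
  refine le_iInf₂ fun v ⟨⟨hv, hv₂, hgrad⟩, hv₀⟩ ↦ ?_
  have hv₄ : eLpNorm v 4 volume ^ 4 ≠ 0 := by
    simpa [eLpNorm_eq_zero_iff hv₂.1] using hv₀
  have hnum : eLpNorm v 2 volume ^ 2 * eLpNorm (gradNorm v) 2 volume ^ 2 ≠ ∞ :=
    ENNReal.mul_ne_top (ENNReal.pow_ne_top hv₂.eLpNorm_ne_top)
      (ENNReal.pow_ne_top hgrad.eLpNorm_ne_top)
  rw [ENNReal.le_div_iff_mul_le (.inl hv₄) (.inr hnum), mul_comm, ← div_eq_mul_inv]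
  exact ENNReal.div_le_of_le_mul' (eLpNorm_four_pow_le_four_mul hv hv₂)

end SharpConstant

section Slicing

variable {ν : Measure ℝ} [SFinite ν] {u : R2 × ℝ → ℂ}

lemma ae_isH1_slice (hu : ∀ᵐ y ∂ν, Differentiable ℝ fun x ↦ u (x, y))
    (hu₂ : MemLp u 2 (volume.prod ν)) (hgrad : MemLp (gradxNorm u) 2 (volume.prod ν)) :
    ∀ᵐ y ∂ν, IsH1 fun x ↦ u (x, y) := by
  filter_upwards [hu, ae_memLp_prodMk_right two_ne_zero ENNReal.ofNat_ne_top hu₂,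
    ae_memLp_prodMk_right two_ne_zero ENNReal.ofNat_ne_top hgrad] with y hdiff hslice hslice_grad
  exact ⟨hdiff, hslice, hslice_grad⟩

lemma CGN2d_mul_eLpNorm_four_pow_le_of_slices (hu : ∀ᵐ y ∂ν, Differentiable ℝ fun x ↦ u (x, y))
    (hu₂ : MemLp u 2 (volume.prod ν)) (hgrad : MemLp (gradxNorm u) 2 (volume.prod ν))
    {M : ℝ≥0∞} (hM : ∀ᵐ y ∂ν, ∫⁻ x, ‖u (x, y)‖ₑ ^ 2 ≤ M) :
    CGN2d * eLpNorm u 4 (volume.prod ν) ^ 4 ≤ M * eLpNorm (gradxNorm u) 2 (volume.prod ν) ^ 2 := by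
  have hu_pow : AEMeasurable (fun p ↦ ‖u p‖ₑ ^ 4) (volume.prod ν) := hu₂.1.enorm.pow_const 4
  have hgrad_sq : AEMeasurable (fun p ↦ ‖gradxNorm u p‖ₑ ^ 2) (volume.prod ν) :=
    hgrad.1.enorm.pow_const 2
  rw [eLpNorm_ofNat_pow_eq_lintegral, eLpNorm_ofNat_pow_eq_lintegral,
    lintegral_prod_symm _ hu_pow, lintegral_prod_symm _ hgrad_sq,
    ← lintegral_const_mul'' _ hu_pow.lintegral_prod_left',
    ← lintegral_const_mul'' _ hgrad_sq.lintegral_prod_left']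
  refine lintegral_mono_ae ?_
  filter_upwards [ae_isH1_slice hu hu₂ hgrad, hM] with y hH1 hy
  have hGN := CGN2d_mul_eLpNorm_four_pow_le hH1
  rw [eLpNorm_ofNat_pow_eq_lintegral, eLpNorm_ofNat_pow_eq_lintegral,
    eLpNorm_ofNat_pow_eq_lintegral] at hGN
  exact hGN.trans (mul_le_mul_left hy _)

end Slicing

/-- Lebesgue measure on the strip `ℝ² × I`; the measure `μT` is the case `I = (0, 2π]`. -/
abbrev stripMeasure (I : Set ℝ) : Measure (R2 × ℝ) :=
  (volume : Measure R2).prod (volume.restrict I)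

lemma eLpNorm_stripMeasure_four_pow_le {I : Set ℝ} (hI : I.OrdConnected) (hI₀ : volume I ≠ 0)
    {u : R2 × ℝ → ℂ} (hu : ∀ x, ∀ y ∈ I, DifferentiableAt ℝ u (x, y))
    (hu₂ : MemLp u 2 (stripMeasure I)) (hgrad : MemLp (gradxNorm u) 2 (stripMeasure I))
    (hdy : MemLp (dyDeriv u) 2 (stripMeasure I)) :
    eLpNorm u 4 (stripMeasure I) ^ 4 ≤ eLpNorm (gradxNorm u) 2 (stripMeasure I) ^ 2 *
      ((volume I * CGN2d)⁻¹ * eLpNorm u 2 (stripMeasure I) ^ 2 +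
        2 ^ 4 * (eLpNorm u 2 (stripMeasure I) * eLpNorm (dyDeriv u) 2 (stripMeasure I))) := by
  have hderiv (x : R2) (t : ℝ) (ht : t ∈ I) :
      HasDerivAt (fun s ↦ u (x, s)) (dyDeriv u (x, t)) t :=
    ((hu x t ht).comp t (by fun_prop)).hasDerivAt
  have hCGN := CGN2d_mul_eLpNorm_four_pow_le_of_slices
    ((ae_restrict_mem hI.measurableSet).mono fun y hy x ↦ (hu x y hy).comp x (by fun_prop))
    hu₂ hgrad ((ae_restrict_mem hI.measurableSet).mono fun y hy ↦
      lintegral_enorm_sq_slice_le hI hI₀ hderiv hu₂ hdy.1 hy)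
  have hC₀ : CGN2d ≠ 0 := ne_bot_of_le_ne_bot (by simp) inv_four_le_CGN2d
  have hC_inv : CGN2d⁻¹ ≤ 4 := ENNReal.inv_le_iff_inv_le.1 inv_four_le_CGN2d
  have hU := hu₂.eLpNorm_ne_top
  have hG := hgrad.eLpNorm_ne_top
  have hD := hdy.eLpNorm_ne_top
  set U := eLpNorm u 2 (stripMeasure I)
  set G := eLpNorm (gradxNorm u) 2 (stripMeasure I)
  set D := eLpNorm (dyDeriv u) 2 (stripMeasure I)
  have hfin : (U ^ 2 / volume I + 2 * (U * D)) * G ^ 2 ≠ ∞ := by finiteness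
  rw [mul_comm, ← ENNReal.le_div_iff_mul_le (.inl hC₀) (.inr hfin)] at hCGN
  calc eLpNorm u 4 (stripMeasure I) ^ 4
      ≤ (U ^ 2 / volume I + 2 * (U * D)) * G ^ 2 / CGN2d := hCGN
    _ = G ^ 2 * ((volume I * CGN2d)⁻¹ * U ^ 2 + 2 * CGN2d⁻¹ * (U * D)) := by
      rw [ENNReal.mul_inv (.inl hI₀) (.inr hC₀)]
      simp only [div_eq_mul_inv]
      ring
    _ ≤ G ^ 2 * ((volume I * CGN2d)⁻¹ * U ^ 2 + 2 * 4 * (U * D)) := by gcongr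
    _ ≤ G ^ 2 * ((volume I * CGN2d)⁻¹ * U ^ 2 + 2 ^ 4 * (U * D)) := by gcongr; norm_num

lemma le_rpow_mul_rpow_add_of_pow_four_le {a g K U c D : ℝ≥0∞}
    (h : a ^ 4 ≤ g ^ 2 * (K⁻¹ * U ^ 2 + c ^ 4 * (U * D))) :
    a ≤ g ^ ((1 : ℝ) / 2) * (K ^ (-(1 : ℝ) / 4) * U ^ ((1 : ℝ) / 2) +
      c * U ^ ((1 : ℝ) / 4) * D ^ ((1 : ℝ) / 4)) := by
  have hquarter : (0 : ℝ) ≤ 1 / 4 := by norm_num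
  have hroot_four (x : ℝ≥0∞) : (x ^ 4) ^ ((1 : ℝ) / 4) = x := by
    rw [← ENNReal.rpow_natCast, ← ENNReal.rpow_mul]
    norm_num
  have hroot_sq (x : ℝ≥0∞) : (x ^ 2) ^ ((1 : ℝ) / 4) = x ^ ((1 : ℝ) / 2) := by
    rw [← ENNReal.rpow_natCast, ← ENNReal.rpow_mul]
    norm_num
  have hroot_inv : K⁻¹ ^ ((1 : ℝ) / 4) = K ^ (-(1 : ℝ) / 4) := by
    rw [ENNReal.inv_rpow, ← ENNReal.rpow_neg, neg_div]
  calc a = (a ^ 4) ^ ((1 : ℝ) / 4) := (hroot_four a).symm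
    _ ≤ (g ^ 2 * (K⁻¹ * U ^ 2 + c ^ 4 * (U * D))) ^ ((1 : ℝ) / 4) := by gcongr
    _ ≤ (g ^ 2) ^ ((1 : ℝ) / 4) *
        ((K⁻¹ * U ^ 2) ^ ((1 : ℝ) / 4) + (c ^ 4 * (U * D)) ^ ((1 : ℝ) / 4)) := by
      rw [ENNReal.mul_rpow_of_nonneg _ _ hquarter]
      gcongr
      exact ENNReal.rpow_add_le_add_rpow _ _ hquarter (by norm_num)
    _ = _ := by
      simp only [ENNReal.mul_rpow_of_nonneg _ _ hquarter, hroot_four, hroot_sq, hroot_inv,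
        mul_assoc]

theorem gagliardo_nirenberg_R2xT_general {I : Set ℝ} (hI : I.OrdConnected) (hI₀ : volume I ≠ 0)
    {u : R2 × ℝ → ℂ} (hu : ∀ x, ∀ y ∈ I, DifferentiableAt ℝ u (x, y))
    (hu₂ : MemLp u 2 (stripMeasure I)) (hgrad : MemLp (gradxNorm u) 2 (stripMeasure I))
    (hdy : MemLp (dyDeriv u) 2 (stripMeasure I)) :
    eLpNorm u 4 (stripMeasure I) ≤
      eLpNorm (gradxNorm u) 2 (stripMeasure I) ^ ((1 : ℝ) / 2) *
        ((volume I * CGN2d) ^ (-(1 : ℝ) / 4) * eLpNorm u 2 (stripMeasure I) ^ ((1 : ℝ) / 2) +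
          2 * eLpNorm u 2 (stripMeasure I) ^ ((1 : ℝ) / 4) *
            eLpNorm (dyDeriv u) 2 (stripMeasure I) ^ ((1 : ℝ) / 4)) :=
  le_rpow_mul_rpow_add_of_pow_four_le (eLpNorm_stripMeasure_four_pow_le hI hI₀ hu hu₂ hgrad hdy)

/-- Proposition 1.4 (additive Gagliardo–Nirenberg inequality on `ℝ²×𝕋`): there exists a
constant `c > 0` such that for every `u ∈ H¹(ℝ²×𝕋)`,
`‖u‖_{L⁴} ≤ ‖∇ₓu‖_{L²}^{1/2} ((2π C_{GN,2d})^{-1/4} ‖u‖_{L²}^{1/2}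
  + c ‖u‖_{L²}^{1/4} ‖∂ᵧu‖_{L²}^{1/4})`. -/
theorem gagliardo_nirenberg_R2xT :
    ∃ c : NNReal, 0 < c ∧ ∀ u : R2 × ℝ → ℂ, IsH1T u →
      eLpNorm u 4 μT ≤
        eLpNorm (gradxNorm u) 2 μT ^ ((1 : ℝ) / 2) *
          ((ENNReal.ofReal (2 * π) * CGN2d) ^ (-(1 : ℝ) / 4) * eLpNorm u 2 μT ^ ((1 : ℝ) / 2) +
            (c : ℝ≥0∞) * eLpNorm u 2 μT ^ ((1 : ℝ) / 4) *
              eLpNorm (dyDeriv u) 2 μT ^ ((1 : ℝ) / 4)) := by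
  refine ⟨2, two_pos, fun u ⟨hu, _, hu₂, hgrad, hdy⟩ ↦ ?_⟩
  simpa only [μT, Real.volume_Ioc, sub_zero, ENNReal.coe_ofNat] using
    gagliardo_nirenberg_R2xT_general Set.ordConnected_Ioc (by simp [pi_pos])
      (fun x y _ ↦ hu (x, y)) hu₂ hgrad hdy

end
end

section
/- Let C_{GN,2d} := inf{ ‖u‖_{L²(ℝ²)}² ‖∇u‖_{L²(ℝ²)}² / ‖u‖_{L⁴(ℝ²)}⁴ : u ∈ H¹(ℝ²), u ≠ 0 }. There exists u ∈ H¹(ℝ²×𝕋) such that ‖u‖_{L⁴(ℝ²×𝕋)} > (2π C_{GN,2d})^{-1/4} · ‖∇ₓu‖_{L²(ℝ²×𝕋)}^{1/2} · ‖u‖_{L²(ℝ²×𝕋)}^{1/2}; that is, the inequality of Proposition 1.4 fails if the constant c multiplying the ∂ᵧ term is taken to be 0. -/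
open MeasureTheory Real
open scoped ENNReal

noncomputable section

/-!
For `u(x, y) = f(y) Q(x)` the ratio `‖u‖₄⁴ / (‖∇ₓu‖₂² ‖u‖₂²)` is `‖f‖₄⁴ / ‖f‖₂⁴` divided by the
Gagliardo–Nirenberg quotient of `Q`. The Cauchy–Schwarz inequality `‖f‖₂⁴ ≤ 2π ‖f‖₄⁴` on `𝕋` is
strict for `f = cos`, where it reads `π² < 3π²/2`, so a `Q` whose quotient is close enough to
`C_{GN,2d}` gives a ratio above `(2π C_{GN,2d})⁻¹`. Such a `Q` exists because
`0 < C_{GN,2d} < ∞`. Positivity is Ladyzhenskaya's inequality: integrating the derivative of `|u|²`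
along the two coordinate lines through a point gives two bounds for `|u|²`, whose product is
integrated by Fubini.
-/

section LpNorm

variable {α β E F : Type*} [MeasurableSpace α] [MeasurableSpace β]
  [NormedAddCommGroup E] [NormedAddCommGroup F] {μ : Measure α} {ν : Measure β}

lemma eLpNorm_natCast_pow_eq_lintegral {n : ℕ} (hn : n ≠ 0) (f : α → E) :
    eLpNorm f n μ ^ n = ∫⁻ x, ‖f x‖ₑ ^ n ∂μ := by
  simpa using eLpNorm_nnreal_pow_eq_lintegral (μ := μ) (f := f) (p := n) (mod_cast hn)

lemma eLpNorm_natCast_pow_eq_ofReal_integral {n : ℕ} (hn : n ≠ 0) {f : α → E} (hf : MemLp f n μ) :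
    eLpNorm f n μ ^ n = ENNReal.ofReal (∫ x, ‖f x‖ ^ n ∂μ) := by
  rw [eLpNorm_natCast_pow_eq_lintegral hn, ofReal_integral_eq_lintegral_ofReal
    (hf.integrable_norm_pow hn) (.of_forall fun x ↦ pow_nonneg (norm_nonneg _) n)]
  simp only [ENNReal.ofReal_pow (norm_nonneg _), ofReal_norm]

lemma lintegral_enorm_mul_enorm_le (p q : ℝ≥0∞) [ENNReal.HolderConjugate p q]
    {f : α → E} {g : α → F} (hf : AEStronglyMeasurable f μ) (hg : AEStronglyMeasurable g μ) :
    ∫⁻ x, ‖f x‖ₑ * ‖g x‖ₑ ∂μ ≤ eLpNorm f p μ * eLpNorm g q μ := by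
  simpa [eLpNorm_one_eq_lintegral_enorm] using
    eLpNorm_smul_le_mul_eLpNorm (p := p) (q := q) (r := 1) hg.norm hf.norm

lemma eLpNorm_smul_prod {𝕜 : Type*} [NormedRing 𝕜] [Module 𝕜 E] [NormSMulClass 𝕜 E] [SFinite ν]
    {p : ℝ≥0∞} (hp : p ≠ ∞) {f : α → E} {g : β → 𝕜} (hf : AEStronglyMeasurable f μ)
    (hg : AEStronglyMeasurable g ν) :
    eLpNorm (fun z : α × β ↦ g z.2 • f z.1) p (μ.prod ν) = eLpNorm g p ν * eLpNorm f p μ := by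
  rcases eq_or_ne p 0 with rfl | hp0
  · simp
  simp_rw [eLpNorm_eq_lintegral_rpow_enorm_toReal hp0 hp, enorm_smul,
    ENNReal.mul_rpow_of_nonneg _ _ ENNReal.toReal_nonneg]
  rw [lintegral_congr fun _ ↦ mul_comm _ _,
    lintegral_prod_mul (hf.enorm.pow_const _) (hg.enorm.pow_const _),
    ENNReal.mul_rpow_of_nonneg _ _ (by positivity), mul_comm]

lemma memLp_smul_prod {𝕜 : Type*} [NormedRing 𝕜] [Module 𝕜 E] [NormSMulClass 𝕜 E] [SFinite ν]
    {p : ℝ≥0∞} (hp : p ≠ ∞) {f : α → E} {g : β → 𝕜} (hf : MemLp f p μ) (hg : MemLp g p ν) :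
    MemLp (fun z : α × β ↦ g z.2 • f z.1) p (μ.prod ν) :=
  ⟨hg.1.comp_snd.smul hf.1.comp_fst, by
    rw [eLpNorm_smul_prod hp hf.1 hg.1]; exact ENNReal.mul_lt_top hg.2 hf.2⟩

lemma lintegral_sq_le_sq_lintegral_of_le_marginals [SFinite μ] [SFinite ν]
    {h w : α × β → ℝ≥0∞} (hh : Measurable h) (hw : Measurable w)
    (hβ : ∀ᵐ x ∂μ, ∀ y, h (x, y) ≤ ∫⁻ t, w (x, t) ∂ν)
    (hα : ∀ᵐ y ∂ν, ∀ x, h (x, y) ≤ ∫⁻ s, w (s, y) ∂μ) :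
    ∫⁻ z, h z ^ 2 ∂μ.prod ν ≤ (∫⁻ z, w z ∂μ.prod ν) ^ 2 := by
  calc ∫⁻ z, h z ^ 2 ∂μ.prod ν = ∫⁻ x, ∫⁻ y, h (x, y) ^ 2 ∂ν ∂μ :=
        lintegral_prod _ (hh.pow_const 2).aemeasurable
    _ ≤ ∫⁻ x, ∫⁻ y, (∫⁻ t, w (x, t) ∂ν) * (∫⁻ s, w (s, y) ∂μ) ∂ν ∂μ := by
        refine lintegral_mono_ae (hβ.mono fun x hx ↦ lintegral_mono_ae (hα.mono fun y hy ↦ ?_))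
        rw [sq]
        exact mul_le_mul' (hx y) (hy x)
    _ = (∫⁻ x, ∫⁻ t, w (x, t) ∂ν ∂μ) * ∫⁻ y, ∫⁻ s, w (s, y) ∂μ ∂ν := by
        simp_rw [lintegral_const_mul _ hw.lintegral_prod_left']
        exact lintegral_mul_const _ hw.lintegral_prod_right'
    _ = (∫⁻ z, w z ∂μ.prod ν) ^ 2 := by
        rw [← lintegral_prod _ hw.aemeasurable, ← lintegral_prod_symm _ hw.aemeasurable, sq]

end LpNorm

section Ladyzhenskaya

lemma enorm_le_lintegral_enorm_deriv {E : Type*} [NormedAddCommGroup E] [NormedSpace ℝ E]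
    [CompleteSpace E] {f : ℝ → E} (hf : Differentiable ℝ f) (hfi : Integrable f) (a : ℝ) :
    ‖f a‖ₑ ≤ ∫⁻ t, ‖deriv f t‖ₑ := by
  by_cases hfin : ∫⁻ t, ‖deriv f t‖ₑ = ∞
  · simp [hfin]
  have hderiv : ∀ t ∈ Set.Iic a, HasDerivAt f (deriv f t) t := fun t _ ↦ (hf t).hasDerivAt
  have hf'i : Integrable (deriv f) := ⟨aestronglyMeasurable_deriv f _, lt_top_iff_ne_top.2 hfin⟩
  have hlim := tendsto_zero_of_hasDerivAt_of_integrableOn_Iic hderiv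
    hf'i.integrableOn hfi.integrableOn
  calc ‖f a‖ₑ = ‖∫ t in Set.Iic a, deriv f t‖ₑ := by
        rw [integral_Iic_of_hasDerivAt_of_tendsto' hderiv hf'i.integrableOn hlim, sub_zero]
    _ ≤ ∫⁻ t in Set.Iic a, ‖deriv f t‖ₑ := enorm_integral_le_lintegral_enorm _
    _ ≤ ∫⁻ t, ‖deriv f t‖ₑ := setLIntegral_le_lintegral _ _

variable {E F : Type*} [NormedAddCommGroup E] [InnerProductSpace ℝ E] [NormedAddCommGroup F]

lemma enorm_sq_le_lintegral_of_hasDerivAt {g g' : ℝ → E} {w : ℝ → F}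
    (hg : ∀ t, HasDerivAt g (g' t) t) (hw : ∀ t, ‖g' t‖ₑ ≤ ‖w t‖ₑ)
    (hgi : Integrable fun t ↦ ‖g t‖ ^ 2) (a : ℝ) :
    ‖g a‖ₑ ^ 2 ≤ ∫⁻ t, 2 * (‖g t‖ₑ * ‖w t‖ₑ) := by
  have hderiv (t : ℝ) : HasDerivAt (fun s ↦ ‖g s‖ ^ 2) (2 * inner ℝ (g t) (g' t)) t :=
    (hg t).norm_sq
  calc ‖g a‖ₑ ^ 2 = ‖‖g a‖ ^ 2‖ₑ := by rw [enorm_pow, enorm_norm]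
    _ ≤ ∫⁻ t, ‖deriv (fun s ↦ ‖g s‖ ^ 2) t‖ₑ :=
        enorm_le_lintegral_enorm_deriv (fun t ↦ (hderiv t).differentiableAt) hgi a
    _ ≤ ∫⁻ t, 2 * (‖g t‖ₑ * ‖w t‖ₑ) := lintegral_mono fun t ↦ by
        rw [(hderiv t).deriv, enorm_mul, show ‖(2 : ℝ)‖ₑ = 2 by simp [enorm_eq_nnnorm]]
        gcongr
        calc ‖inner ℝ (g t) (g' t)‖ₑ ≤ ‖g t‖ₑ * ‖g' t‖ₑ :=
              ENNReal.coe_le_coe.2 (nnnorm_inner_le_nnnorm _ _)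
          _ ≤ ‖g t‖ₑ * ‖w t‖ₑ := by gcongr; exact hw t

variable {v : ℝ × ℝ → E} {w : ℝ × ℝ → F}

lemma eLpNorm_four_pow_le_of_partial_deriv_le (hv : Differentiable ℝ v) (hv2 : MemLp v 2)
    (hw : StronglyMeasurable w)
    (hfst : ∀ p, ‖fderiv ℝ v p (1, 0)‖ₑ ≤ ‖w p‖ₑ) (hsnd : ∀ p, ‖fderiv ℝ v p (0, 1)‖ₑ ≤ ‖w p‖ₑ) :
    eLpNorm v 4 volume ^ 4 ≤ 4 * (eLpNorm v 2 volume ^ 2 * eLpNorm w 2 volume ^ 2) := by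
  have hvm : Measurable (‖v ·‖ₑ) := hv.continuous.enorm.measurable
  have hint : Integrable (fun p ↦ ‖v p‖ ^ 2) := hv2.integrable_norm_pow two_ne_zero
  have hpartial_fst (a b : ℝ) : HasDerivAt (fun t ↦ v (t, b)) (fderiv ℝ v (a, b) (1, 0)) a :=
    (hv (a, b)).hasFDerivAt.comp_hasDerivAt a ((hasDerivAt_id a).prodMk (hasDerivAt_const a b))
  have hpartial_snd (a b : ℝ) : HasDerivAt (fun t ↦ v (a, t)) (fderiv ℝ v (a, b) (0, 1)) b :=
    (hv (a, b)).hasFDerivAt.comp_hasDerivAt b ((hasDerivAt_const b a).prodMk (hasDerivAt_id b))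
  have hline_snd : ∀ᵐ a : ℝ, ∀ b, ‖v (a, b)‖ₑ ^ 2 ≤ ∫⁻ t, 2 * (‖v (a, t)‖ₑ * ‖w (a, t)‖ₑ) :=
    hint.prod_right_ae.mono fun a ha ↦
      enorm_sq_le_lintegral_of_hasDerivAt (hpartial_snd a) (fun _ ↦ hsnd _) ha
  have hline_fst : ∀ᵐ b : ℝ, ∀ a, ‖v (a, b)‖ₑ ^ 2 ≤ ∫⁻ t, 2 * (‖v (t, b)‖ₑ * ‖w (t, b)‖ₑ) :=
    hint.prod_left_ae.mono fun b hb ↦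
      enorm_sq_le_lintegral_of_hasDerivAt (hpartial_fst · b) (fun _ ↦ hfst _) hb
  calc eLpNorm v 4 volume ^ 4 = ∫⁻ p, (‖v p‖ₑ ^ 2) ^ 2 := by
        simp_rw [← pow_mul]
        exact mod_cast eLpNorm_natCast_pow_eq_lintegral four_ne_zero v
    _ ≤ (∫⁻ p, 2 * (‖v p‖ₑ * ‖w p‖ₑ)) ^ 2 :=
        lintegral_sq_le_sq_lintegral_of_le_marginals (hvm.pow_const 2)
          ((hvm.mul hw.enorm).const_mul 2) hline_snd hline_fst
    _ ≤ (2 * (eLpNorm v 2 volume * eLpNorm w 2 volume)) ^ 2 := by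
        rw [lintegral_const_mul' _ _ ENNReal.ofNat_ne_top]
        gcongr
        exact lintegral_enorm_mul_enorm_le 2 2 hv2.1 hw.aestronglyMeasurable
    _ = 4 * (eLpNorm v 2 volume ^ 2 * eLpNorm w 2 volume ^ 2) := by rw [mul_pow, mul_pow]; norm_num

lemma measurePreserving_toLp_pair :
    MeasurePreserving (fun p : ℝ × ℝ ↦ (!₂[p.1, p.2] : R2)) :=
  (PiLp.volume_preserving_toLp (Fin 2)).comp (volume_preserving_finTwoArrow ℝ).symm

lemma eLpNorm_four_pow_le_eLpNorm_fderiv [CompleteSpace E] {u : R2 → E}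
    (hu : Differentiable ℝ u) (hu2 : MemLp u 2) :
    eLpNorm u 4 volume ^ 4 ≤
      4 * (eLpNorm u 2 volume ^ 2 * eLpNorm (fun x ↦ ‖fderiv ℝ u x‖) 2 volume ^ 2) := by
  let e : ℝ × ℝ →L[ℝ] R2 :=
    (EuclideanSpace.equiv (Fin 2) ℝ).symm.toContinuousLinearMap ∘L
      (ContinuousLinearEquiv.finTwoArrow ℝ ℝ).symm.toContinuousLinearMap
  have he : MeasurePreserving e := measurePreserving_toLp_pair
  have hgrad : StronglyMeasurable (fun x ↦ ‖fderiv ℝ u x‖) :=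
    (measurable_fderiv ℝ u).norm.stronglyMeasurable
  have hdir (p z : ℝ × ℝ) (hz : ‖e z‖ = 1) :
      ‖fderiv ℝ (u ∘ e) p z‖ₑ ≤ ‖‖fderiv ℝ u (e p)‖‖ₑ := by
    rw [fderiv_comp p (hu _) e.differentiableAt, e.fderiv]
    refine enorm_le_iff_norm_le.2 ?_
    simpa [hz] using (fderiv ℝ u (e p)).le_opNorm (e z)
  have hpull := eLpNorm_four_pow_le_of_partial_deriv_le (hu.comp e.differentiable)
    (hu2.comp_measurePreserving he) (hgrad.comp_measurable e.measurable)
    (fun p ↦ hdir p _ (by simp [e, EuclideanSpace.norm_eq]))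
    (fun p ↦ hdir p _ (by simp [e, EuclideanSpace.norm_eq]))
  rwa [eLpNorm_comp_measurePreserving hu2.1 he, eLpNorm_comp_measurePreserving hu2.1 he,
    eLpNorm_comp_measurePreserving hgrad.aestronglyMeasurable he] at hpull

end Ladyzhenskaya

section GagliardoNirenberg

/-- The two-dimensional Gagliardo–Nirenberg quotient, whose infimum over nonzero `u ∈ H¹(ℝ²)` is
`CGN2d`. -/
def gnQuotient (u : R2 → ℂ) : ℝ≥0∞ :=
  eLpNorm u 2 volume ^ 2 * eLpNorm (gradNorm u) 2 volume ^ 2 / eLpNorm u 4 volume ^ 4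

variable {u : R2 → ℂ}

lemma IsH1.eLpNorm_four_pow_le (hu : IsH1 u) :
    eLpNorm u 4 volume ^ 4 ≤
      4 * (eLpNorm u 2 volume ^ 2 * eLpNorm (gradNorm u) 2 volume ^ 2) :=
  eLpNorm_four_pow_le_eLpNorm_fderiv hu.1 hu.2.1

lemma IsH1.eLpNorm_mul_eLpNorm_gradNorm_ne_top (hu : IsH1 u) :
    eLpNorm u 2 volume ^ 2 * eLpNorm (gradNorm u) 2 volume ^ 2 ≠ ∞ :=
  ENNReal.mul_ne_top (ENNReal.pow_ne_top hu.2.1.2.ne) (ENNReal.pow_ne_top hu.2.2.2.ne)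

lemma IsH1.eLpNorm_four_pow_ne_zero (hu : IsH1 u) (hu0 : ¬ u =ᵐ[volume] 0) :
    eLpNorm u 4 volume ^ 4 ≠ 0 :=
  pow_ne_zero _ fun h ↦
    hu0 ((eLpNorm_eq_zero_iff hu.1.continuous.aestronglyMeasurable four_ne_zero).1 h)

lemma IsH1.eLpNorm_four_pow_ne_top (hu : IsH1 u) : eLpNorm u 4 volume ^ 4 ≠ ∞ :=
  ne_top_of_le_ne_top
    (ENNReal.mul_ne_top ENNReal.ofNat_ne_top hu.eLpNorm_mul_eLpNorm_gradNorm_ne_top)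
    hu.eLpNorm_four_pow_le

lemma IsH1.inv_four_le_gnQuotient (hu : IsH1 u) (hu0 : ¬ u =ᵐ[volume] 0) :
    4⁻¹ ≤ gnQuotient u := by
  rw [gnQuotient, ENNReal.le_div_iff_mul_le (.inl (hu.eLpNorm_four_pow_ne_zero hu0))
    (.inl hu.eLpNorm_four_pow_ne_top), mul_comm, ← div_eq_mul_inv]
  exact ENNReal.div_le_of_le_mul' hu.eLpNorm_four_pow_le

lemma isH1_of_contDiff_of_hasCompactSupport (hu : ContDiff ℝ 1 u) (hsupp : HasCompactSupport u) :
    IsH1 u :=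
  ⟨hu.differentiable one_ne_zero, hu.continuous.memLp_of_hasCompactSupport hsupp,
    (hu.continuous_fderiv one_ne_zero).norm.memLp_of_hasCompactSupport
      (hsupp.fderiv (𝕜 := ℝ)).norm⟩

lemma exists_isH1_not_ae_eq_zero : ∃ u : R2 → ℂ, IsH1 u ∧ ¬ u =ᵐ[volume] 0 := by
  let φ : ContDiffBump (0 : R2) := ⟨1, 2, one_pos, one_lt_two⟩
  let u : R2 → ℂ := fun x ↦ (φ x : ℂ)
  have hu : ContDiff ℝ 1 u := Complex.ofRealCLM.contDiff.comp φ.contDiff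
  have hsupp : HasCompactSupport u := φ.hasCompactSupport.comp_left Complex.ofReal_zero
  refine ⟨u, isH1_of_contDiff_of_hasCompactSupport hu hsupp, fun h ↦ ?_⟩
  have hu0 : u 0 = 0 := congrFun ((hu.continuous.ae_eq_iff_eq volume continuous_zero).1 h) 0
  have hφ : φ 0 = 1 := φ.one_of_mem_closedBall (by simp [φ])
  simp [u, hφ] at hu0

lemma CGN2d_ne_zero : CGN2d ≠ 0 := by
  have h : (4 : ℝ≥0∞)⁻¹ ≤ CGN2d := le_iInf₂ fun _ hu ↦ hu.1.inv_four_le_gnQuotient hu.2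
  exact (h.trans_lt' (by simp)).ne'

lemma CGN2d_ne_top : CGN2d ≠ ∞ := by
  obtain ⟨u, hu, hu0⟩ := exists_isH1_not_ae_eq_zero
  have h : CGN2d ≤ gnQuotient u := iInf₂_le u ⟨hu, hu0⟩
  exact ne_top_of_le_ne_top (ENNReal.div_ne_top hu.eLpNorm_mul_eLpNorm_gradNorm_ne_top
    (hu.eLpNorm_four_pow_ne_zero hu0)) h

lemma exists_isH1_mul_lt_mul_CGN2d {a b : ℝ≥0∞} (hab : a < b) :
    ∃ u : R2 → ℂ, IsH1 u ∧
      a * (eLpNorm u 2 volume ^ 2 * eLpNorm (gradNorm u) 2 volume ^ 2) <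
        b * CGN2d * eLpNorm u 4 volume ^ 4 := by
  have hlt : CGN2d < b * CGN2d / a := by
    rw [ENNReal.lt_div_iff_mul_lt (.inr CGN2d_ne_top) (.inl hab.ne_top), mul_comm]
    exact ENNReal.mul_lt_mul_left CGN2d_ne_zero CGN2d_ne_top hab
  obtain ⟨u, ⟨hu, hu0⟩, hQ⟩ : ∃ u, (IsH1 u ∧ ¬ u =ᵐ[volume] 0) ∧ gnQuotient u < b * CGN2d / a := by
    simpa [CGN2d, gnQuotient, iInf_lt_iff, and_assoc] using hlt
  refine ⟨u, hu, ?_⟩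
  rwa [gnQuotient, ENNReal.div_lt_iff (.inl (hu.eLpNorm_four_pow_ne_zero hu0))
      (.inl hu.eLpNorm_four_pow_ne_top), ENNReal.mul_comm_div, ← mul_div_assoc,
    ENNReal.lt_div_iff_mul_lt (.inr hu.eLpNorm_mul_eLpNorm_gradNorm_ne_top) (.inl hab.ne_top),
    mul_comm _ a] at hQ

end GagliardoNirenberg

section SeparatedFunctions

/-- Lebesgue measure on the period interval `(0, 2π]`, i.e. the second factor of `μT`. -/
abbrev torusMeasure : Measure ℝ := volume.restrict (Set.Ioc 0 (2 * π))

/-- The separated function `(x, y) ↦ f(y) Q(x)`. -/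
def separated (f : ℝ → ℝ) (Q : R2 → ℂ) (p : R2 × ℝ) : ℂ := f p.2 • Q p.1

lemma memLp_torusMeasure_of_continuous {E : Type*} [NormedAddCommGroup E] {f : ℝ → E}
    (hf : Continuous f) (p : ℝ≥0∞) : MemLp f p torusMeasure := by
  obtain ⟨C, hC⟩ := isCompact_Icc.exists_bound_of_continuousOn (s := Set.Icc 0 (2 * π))
    hf.continuousOn
  refine .of_bound hf.aestronglyMeasurable C ?_
  exact (ae_restrict_mem measurableSet_Ioc).mono fun y hy ↦ hC y (Set.Ioc_subset_Icc_self hy)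

variable {f : ℝ → ℝ} {Q : R2 → ℂ}

lemma gradxNorm_separated (f : ℝ → ℝ) (Q : R2 → ℂ) :
    gradxNorm (separated f Q) = fun p ↦ ‖f p.2‖ • gradNorm Q p.1 := by
  ext p
  have hfderiv : fderiv ℝ (fun x ↦ f p.2 • Q x) p.1 = f p.2 • fderiv ℝ Q p.1 :=
    congrFun (fderiv_const_smul_field (f p.2)) p.1
  exact (congrArg norm hfderiv).trans (norm_smul _ _)

lemma dyDeriv_separated (hf : Differentiable ℝ f) (Q : R2 → ℂ) :
    dyDeriv (separated f Q) = fun p ↦ deriv f p.2 • Q p.1 := by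
  ext p
  exact deriv_smul_const (hf p.2) (Q p.1)

lemma isH1T_separated (hf : ContDiff ℝ 1 f) (hper : f.Periodic (2 * π)) (hQ : IsH1 Q) :
    IsH1T (separated f Q) := by
  obtain ⟨hQd, hQ2, hQg⟩ := hQ
  have hfd : Differentiable ℝ f := hf.differentiable one_ne_zero
  have hf2 := memLp_torusMeasure_of_continuous hf.continuous 2
  refine ⟨(hfd.comp differentiable_snd).smul (hQd.comp differentiable_fst), fun x y ↦ ?_,
    memLp_smul_prod ENNReal.ofNat_ne_top hQ2 hf2, ?_, ?_⟩
  · simp only [separated, hper y]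
  · rw [gradxNorm_separated]
    exact memLp_smul_prod ENNReal.ofNat_ne_top hQg hf2.norm
  · rw [dyDeriv_separated hfd]
    exact memLp_smul_prod ENNReal.ofNat_ne_top hQ2
      (memLp_torusMeasure_of_continuous (hf.continuous_deriv le_rfl) 2)

lemma eLpNorm_separated {p : ℝ≥0∞} (hp : p ≠ ∞) (hf : AEStronglyMeasurable f torusMeasure)
    (hQ : AEStronglyMeasurable Q) :
    eLpNorm (separated f Q) p μT = eLpNorm f p torusMeasure * eLpNorm Q p volume :=
  eLpNorm_smul_prod hp hQ hf

lemma eLpNorm_gradxNorm_separated {p : ℝ≥0∞} (hp : p ≠ ∞)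
    (hf : AEStronglyMeasurable f torusMeasure) (Q : R2 → ℂ) :
    eLpNorm (gradxNorm (separated f Q)) p μT =
      eLpNorm f p torusMeasure * eLpNorm (gradNorm Q) p volume := by
  have hgrad : Measurable (gradNorm Q) := (measurable_fderiv ℝ Q).norm
  rw [gradxNorm_separated, ← eLpNorm_norm f]
  exact eLpNorm_smul_prod (f := gradNorm Q) (g := fun y ↦ ‖f y‖) hp hgrad.aestronglyMeasurable
    hf.norm

end SeparatedFunctions

lemma rpow_neg_quarter_mul_sqrt_mul_sqrt_lt {x a b c : ℝ≥0∞} (h : a ^ 2 * b ^ 2 < x * c ^ 4) :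
    x ^ (-(1 : ℝ) / 4) * a ^ ((1 : ℝ) / 2) * b ^ ((1 : ℝ) / 2) < c := by
  have hsqrt (z : ℝ≥0∞) : (z ^ ((1 : ℝ) / 2)) ^ 4 = z ^ 2 := by
    rw [← ENNReal.rpow_mul_natCast, ← ENNReal.rpow_natCast]
    norm_num
  have hquarter : (x ^ (-(1 : ℝ) / 4)) ^ 4 = x⁻¹ := by
    rw [← ENNReal.rpow_mul_natCast, ← ENNReal.rpow_neg_one]
    norm_num
  refine lt_of_pow_lt_pow_left' 4 ?_
  rw [mul_pow, mul_pow, hsqrt, hsqrt, hquarter, mul_assoc, mul_comm, ← div_eq_mul_inv]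
  exact ENNReal.div_lt_of_lt_mul' h

lemma exists_isH1_separated_lt {f : ℝ → ℝ} (hf : AEStronglyMeasurable f torusMeasure)
    (hlt : eLpNorm f 2 torusMeasure ^ 4 <
      ENNReal.ofReal (2 * π) * eLpNorm f 4 torusMeasure ^ 4) :
    ∃ Q : R2 → ℂ, IsH1 Q ∧
      (ENNReal.ofReal (2 * π) * CGN2d) ^ (-(1 : ℝ) / 4) *
          eLpNorm (gradxNorm (separated f Q)) 2 μT ^ ((1 : ℝ) / 2) *
          eLpNorm (separated f Q) 2 μT ^ ((1 : ℝ) / 2) <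
        eLpNorm (separated f Q) 4 μT := by
  obtain ⟨Q, hQ, hQlt⟩ := exists_isH1_mul_lt_mul_CGN2d hlt
  refine ⟨Q, hQ, rpow_neg_quarter_mul_sqrt_mul_sqrt_lt ?_⟩
  rw [eLpNorm_gradxNorm_separated ENNReal.ofNat_ne_top hf,
    eLpNorm_separated ENNReal.ofNat_ne_top hf hQ.2.1.1,
    eLpNorm_separated ENNReal.ofNat_ne_top hf hQ.2.1.1]
  convert hQlt using 1 <;> ring

lemma eLpNorm_cos_two_pow : eLpNorm cos 2 torusMeasure ^ 2 = ENNReal.ofReal π := by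
  have h := eLpNorm_natCast_pow_eq_ofReal_integral two_ne_zero
    (memLp_torusMeasure_of_continuous continuous_cos (2 : ℕ))
  simp only [norm_eq_abs, sq_abs] at h
  rw [← intervalIntegral.integral_of_le two_pi_pos.le, integral_cos_sq] at h
  simpa using h

lemma eLpNorm_cos_four_pow : eLpNorm cos 4 torusMeasure ^ 4 = ENNReal.ofReal (3 * π / 4) := by
  have h := eLpNorm_natCast_pow_eq_ofReal_integral four_ne_zero
    (memLp_torusMeasure_of_continuous continuous_cos (4 : ℕ))
  simp only [norm_eq_abs, Even.pow_abs (show Even 4 by decide)] at h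
  rw [← intervalIntegral.integral_of_le two_pi_pos.le, integral_cos_pow 2, integral_cos_sq] at h
  convert h using 2
  · simp
  · simp only [cos_two_pi, sin_two_pi, cos_zero, sin_zero, Nat.cast_ofNat]
    ring

lemma eLpNorm_cos_two_pow_four_lt :
    eLpNorm cos 2 torusMeasure ^ 4 < ENNReal.ofReal (2 * π) * eLpNorm cos 4 torusMeasure ^ 4 := by
  rw [show 4 = 2 * 2 from rfl, pow_mul, eLpNorm_cos_two_pow, eLpNorm_cos_four_pow,
    ← ENNReal.ofReal_pow pi_pos.le, ← ENNReal.ofReal_mul two_pi_pos.le]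
  exact (ENNReal.ofReal_lt_ofReal_iff (by positivity)).2 (by nlinarith [pi_pos])

/-- Second sharpness claim of Remark 1.5(ii): there exists `u ∈ H¹(ℝ²×𝕋)` with
`‖u‖_{L⁴} > (2π C_{GN,2d})^{-1/4} ‖∇ₓu‖_{L²}^{1/2} ‖u‖_{L²}^{1/2}`; i.e. Proposition 1.4
fails with `c = 0`. -/
theorem no_inequality_without_y_derivative :
    ∃ u : R2 × ℝ → ℂ, IsH1T u ∧
      (ENNReal.ofReal (2 * π) * CGN2d) ^ (-(1 : ℝ) / 4) *
          eLpNorm (gradxNorm u) 2 μT ^ ((1 : ℝ) / 2) * eLpNorm u 2 μT ^ ((1 : ℝ) / 2) <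
        eLpNorm u 4 μT := by
  obtain ⟨Q, hQ, hlt⟩ :=
    exists_isH1_separated_lt continuous_cos.aestronglyMeasurable eLpNorm_cos_two_pow_four_lt
  exact ⟨separated cos Q, isH1T_separated contDiff_cos cos_periodic hQ, hlt⟩

end
end
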